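/- Let A be a dehyperplane arrangement in an n-simanifold T. For every flat X ∈ L_A, the alternating sum over flats contained in X satisfies Σ_{Y ∈ L_A, Y ≥ X} (−1)^{dim Y} #C_{A^Y} = (−1)^{dim X}. -/

import Mathlib

open Set

noncomputable section

/-- The ambient Euclidean space `ℝ^N`. -/
abbrev Euc (N : ℕ) := EuclideanSpace ℝ (Fin N)

/-- An `i`-simanifold: a nonempty (open, i.e. boundaryless) contractible topological
`i`-manifold, realized as a subset of the ambient space. -/
def IsSimanifold {N : ℕ} (i : ℕ) (S : Set (Euc N)) : Prop :=
  S.Nonempty ∧ ContractibleSpace S ∧ Nonempty (ChartedSpace (EuclideanSpace ℝ (Fin i)) S)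

/-- A dehyperplane in an `n`-simanifold `T`: an `(n-1)`-simanifold `P ⊆ T` cutting `T`
into two `n`-simanifolds `plus` and `minus`, with `plus ⊔ P ⊔ minus = T` and
`closure plus ∩ closure minus = P`. -/
structure Dehyperplane (N n : ℕ) (T : Set (Euc N)) where
  P : Set (Euc N)
  plus : Set (Euc N)
  minus : Set (Euc N)
  simP : IsSimanifold (n - 1) P
  simPlus : IsSimanifold n plus
  simMinus : IsSimanifold n minus
  union_eq : plus ∪ P ∪ minus = T
  disj_pP : Disjoint plus P
  disj_pm : Disjoint plus minus
  disj_Pm : Disjoint P minus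
  closure_eq : closure plus ∩ closure minus = P

/-- `L_A`: the set of nonempty intersections of elements of `A` (empty intersection `T`),
the flats of `A`. (Ordered by reverse inclusion: `X ≤ Y ↔ Y ⊆ X`.) -/
def flats {N n : ℕ} {T : Set (Euc N)} (A : Set (Dehyperplane N n T)) : Set (Set (Euc N)) :=
  {X | X.Nonempty ∧ ∃ B ⊆ A, X = T ∩ ⋂ P ∈ B, P.P}

/-- A dehyperplane arrangement (DA) in the `n`-simanifold `T`. -/
def IsDA {N : ℕ} (n : ℕ) (T : Set (Euc N)) (A : Set (Dehyperplane N n T)) : Prop :=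
  A.Finite ∧ ∀ P ∈ A, ∀ X ∈ flats A, (P.P ∩ X).Nonempty →
    X ⊆ P.P ∨ ∃ i, 1 ≤ i ∧ i ≤ n ∧ IsSimanifold (i - 1) (P.P ∩ X) ∧
      IsSimanifold i (P.plus ∩ X) ∧ IsSimanifold i (P.minus ∩ X)

/-- `P^ε` for a sign `ε ∈ {+,0,-}`. -/
def Dehyperplane.part {N n : ℕ} {T : Set (Euc N)} (P : Dehyperplane N n T) :
    SignType → Set (Euc N)
  | .pos => P.plus
  | .zero => P.P
  | .neg => P.minus

/-- A face of `A`: a nonempty set of the form `⋂_{P ∈ A} P^{ε_P}`. -/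
def IsFace {N n : ℕ} {T : Set (Euc N)} (A : Set (Dehyperplane N n T))
    (F : Set (Euc N)) : Prop :=
  F.Nonempty ∧ ∃ ε : Dehyperplane N n T → SignType, F = T ∩ ⋂ P ∈ A, P.part (ε P)

/-- A chamber of `A`: a face with `ε_P ≠ 0` for all `P ∈ A`. -/
def IsChamber {N n : ℕ} {T : Set (Euc N)} (A : Set (Dehyperplane N n T))
    (F : Set (Euc N)) : Prop :=
  F.Nonempty ∧ ∃ ε : Dehyperplane N n T → SignType,
    (∀ P ∈ A, ε P ≠ 0) ∧ F = T ∩ ⋂ P ∈ A, P.part (ε P)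

/-- The restriction `A^X = {P ∩ X | P ∈ A, X ⊄ P, P ∩ X ≠ ∅}`, as dehyperplanes in `X`
(viewed as an `m`-simanifold), with halves `P^± ∩ X`. -/
def restrict {N n : ℕ} {T : Set (Euc N)} (A : Set (Dehyperplane N n T)) (m : ℕ)
    (X : Set (Euc N)) : Set (Dehyperplane N m X) :=
  {Q | ∃ P ∈ A, ¬ X ⊆ P.P ∧ (P.P ∩ X).Nonempty ∧
    Q.P = P.P ∩ X ∧ Q.plus = P.plus ∩ X ∧ Q.minus = P.minus ∩ X}

/-- The dimension of a subset of `ℝ^N`: the largest `i` such that `S` contains an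
`i`-simanifold. -/
def sdim {N : ℕ} (S : Set (Euc N)) : ℕ :=
  sSup {i | ∃ T : Set (Euc N), IsSimanifold i T ∧ T ⊆ S}

/-!
The Euler relation for the faces of `A` in a flat `X` is proved by adding the dehyperplanes one at
a time. A cell, that is, a piece of `X` cut out by open sides, either has constant sign for the next
dehyperplane or is cut into two open pieces of the same dimension and a wall of dimension one less,
so the sum of `(-1) ^ dim` over the pieces is preserved. Grouping the faces by the smallest flat
containing them turns this relation into the one for chambers of restrictions.

Two facts about cells are needed. Each side of a dehyperplane has every point of the wall in its
closure, so that no piece of a cut is missing; this is a separation property of contractible sets in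
Euclidean space, obtained by extending nonvanishing maps. And a cell has constant sign for every
dehyperplane it does not meet. Connectedness of cells would give this, but does not propagate
through the induction; what does is the absence of nontrivial clopen subsets determined by signs.
-/

section SmoothRetraction

open MeasureTheory Metric
open scoped NNReal

lemma exists_eval_eq_sum_mul_eval {F : Type*} [Field F] (s : Finset F) (x : F) :
    ∃ l : F → F, ∀ p : Polynomial F, p.degree < s.card →
      p.eval x = ∑ y ∈ s, l y * p.eval y := by
  classical
  refine ⟨fun y => (Lagrange.basis s id y).eval x, fun p hp => ?_⟩
  conv_lhs => rw [Lagrange.eq_interpolate (injOn_id _) hp, Lagrange.interpolate_apply,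
    Polynomial.eval_finsetSum]
  exact Finset.sum_congr rfl fun y _ => by rw [Polynomial.eval_mul, Polynomial.eval_C, mul_comm, id]

lemma exists_polynomial_eval_eq_det_add_smul {R M : Type*} [CommRing R] [Nontrivial R]
    [AddCommGroup M] [Module R M] [Module.Free R M] [Module.Finite R M] (A B : M →ₗ[R] M) :
    ∃ p : Polynomial R, p.natDegree ≤ Module.finrank R M ∧
      ∀ t : R, p.eval t = LinearMap.det (A + t • B) := by
  let b := Module.finBasis R M
  let toMat := LinearMap.toMatrix b b
  refine ⟨Matrix.det ((Polynomial.X : Polynomial R) • (toMat B).map Polynomial.C +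
    (toMat A).map Polynomial.C), ?_, fun t => ?_⟩
  · simpa using Polynomial.natDegree_det_X_add_C_le (toMat B) (toMat A)
  · rw [← LinearMap.det_toMatrix b, ← Polynomial.coe_evalRingHom, RingHom.map_det]
    congr 1
    ext i j
    simp [toMat, Matrix.map_apply, add_comm, mul_comm t]

section NormedSpace

variable {E : Type*} [NormedAddCommGroup E] [NormedSpace ℝ E]

lemma approximatesLinearOn_id_add {w : E → E} {k : ℝ≥0} {s : Set E}
    (hw : LipschitzOnWith k w s) :
    ApproximatesLinearOn (fun z => z + w z) (ContinuousLinearEquiv.refl ℝ E : E →L[ℝ] E) s k :=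
  LipschitzOnWith.approximatesLinearOn (by convert hw using 1; ext z; simp)

lemma subsingleton_or_lt_inv_nnnorm_refl_symm {k : ℝ≥0} (hk : k < 1) :
    Subsingleton E ∨
      k < ‖((ContinuousLinearEquiv.refl ℝ E).symm : E →L[ℝ] E)‖₊⁻¹ := by
  rcases subsingleton_or_nontrivial E with hE | hE
  · exact .inl hE
  · right
    simpa using hk

lemma det_one_add_pos [FiniteDimensional ℝ E] {L : E →L[ℝ] E} (hL : ‖L‖ < 1) : 0 < (1 + L).det := by
  have det_ne_zero : ∀ t ∈ Icc (0 : ℝ) 1, (1 + t • L).det ≠ 0 := by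
    intro t ht
    have hnorm : ‖-(t • L)‖ < 1 := by
      rw [norm_neg, norm_smul, Real.norm_of_nonneg ht.1]
      exact (mul_le_of_le_one_left (norm_nonneg L) ht.2).trans_lt hL
    obtain ⟨w, hw⟩ := isUnit_one_sub_of_norm_lt_one hnorm
    rw [sub_neg_eq_add] at hw
    rw [← hw]
    exact (ContinuousLinearEquiv.unitsEquiv ℝ E w).toLinearEquiv.isUnit_det'.ne_zero
  have hcont : Continuous fun t : ℝ => (1 + t • L).det :=
    ContinuousLinearMap.continuous_det.comp (by fun_prop)
  by_contra! hneg
  obtain ⟨t, ht, ht0⟩ := intermediate_value_Icc' zero_le_one hcont.continuousOn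
    (show (0 : ℝ) ∈ Icc _ _ from ⟨by simpa using hneg, by simp [ContinuousLinearMap.det]⟩)
  exact det_ne_zero t ht ht0

section LipschitzPerturbation

variable {w : E → E} {k : ℝ≥0} (hw : LipschitzOnWith k w (closedBall 0 1)) (hk : k < 1)
  (hw0 : ∀ z, ‖z‖ = 1 → w z = 0)
include hw hk hw0

lemma norm_id_add_lt_one [Nontrivial E] {z : E} (hz : ‖z‖ < 1) : ‖z + w z‖ < 1 := by
  obtain ⟨e, he, hez⟩ : ∃ e : E, ‖e‖ = 1 ∧ ‖z - e‖ = 1 - ‖z‖ := by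
    rcases eq_or_ne z 0 with rfl | hz0
    · obtain ⟨e, he⟩ := exists_norm_eq E zero_le_one
      exact ⟨e, he, by simp [he]⟩
    · have hpos : 0 < ‖z‖ := norm_pos_iff.2 hz0
      refine ⟨‖z‖⁻¹ • z, by simp [norm_smul, hpos.ne'], ?_⟩
      calc ‖z - ‖z‖⁻¹ • z‖ = ‖(1 - ‖z‖⁻¹) • z‖ := by rw [sub_smul, one_smul]
        _ = (‖z‖⁻¹ - 1) * ‖z‖ := by
          rw [norm_smul, Real.norm_eq_abs, abs_of_nonpos, neg_sub]
          linarith [(one_le_inv₀ hpos).2 hz.le]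
        _ = 1 - ‖z‖ := by field_simp
  have hwz : ‖w z‖ ≤ k * (1 - ‖z‖) := by
    simpa [hw0 e he, hez] using
      hw.norm_sub_le (mem_closedBall_zero_iff.2 hz.le) (mem_closedBall_zero_iff.2 he.le)
  have hk' : (k : ℝ) < 1 := by exact_mod_cast hk
  calc ‖z + w z‖ ≤ ‖z‖ + k * (1 - ‖z‖) := (norm_add_le _ _).trans (by gcongr)
    _ < 1 := by nlinarith

variable [FiniteDimensional ℝ E]

lemma image_id_add_ball [Nontrivial E] :
    (fun z => z + w z) '' ball (0 : E) 1 = ball 0 1 := by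
  set f : E → E := fun z => z + w z
  have hf : ApproximatesLinearOn f (ContinuousLinearEquiv.refl ℝ E : E →L[ℝ] E)
      (closedBall 0 1) k := approximatesLinearOn_id_add hw
  have hsub : f '' ball 0 1 ⊆ ball (0 : E) 1 := by
    rintro _ ⟨z, hz, rfl⟩
    exact mem_ball_zero_iff.2 (norm_id_add_lt_one hw hk hw0 (mem_ball_zero_iff.1 hz))
  have hopen : IsOpen (f '' ball 0 1) :=
    (hf.mono_set ball_subset_closedBall).open_image
      (ContinuousLinearEquiv.toNonlinearRightInverse _) isOpen_ball
      (subsingleton_or_lt_inv_nnnorm_refl_symm hk)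
  have hclosed : closure (f '' ball 0 1) ∩ ball 0 1 ⊆ f '' ball (0 : E) 1 := by
    rintro y ⟨hyc, hy⟩
    have himage : IsClosed (f '' closedBall 0 1) :=
      ((isCompact_closedBall (0 : E) 1).image_of_continuousOn hf.continuousOn).isClosed
    obtain ⟨z, hz, rfl⟩ := closure_minimal (image_mono ball_subset_closedBall) himage hyc
    refine ⟨z, mem_ball_zero_iff.2 ((mem_closedBall_zero_iff.1 hz).lt_of_ne fun hz1 => ?_), rfl⟩
    simp [f, hw0 z hz1, hz1] at hy
  have hne : (ball (0 : E) 1 ∩ f '' ball 0 1).Nonempty :=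
    have h0 : f 0 ∈ f '' ball 0 1 := mem_image_of_mem f (mem_ball_self one_pos)
    ⟨f 0, hsub h0, h0⟩
  exact hsub.antisymm
    ((convex_ball (0 : E) 1).isPreconnected.subset_of_closure_inter_subset hopen hne hclosed)

lemma setIntegral_ball_det_one_add [Nontrivial E] [MeasurableSpace E] [BorelSpace E]
    (μ : Measure E) [μ.IsAddHaarMeasure] {w' : E → E →L[ℝ] E}
    (hw' : ∀ z ∈ ball (0 : E) 1, HasFDerivAt w (w' z) z) :
    ∫ z in ball (0 : E) 1, (1 + w' z).det ∂μ = μ.real (ball 0 1) := by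
  have hdet : ∀ z ∈ ball (0 : E) 1, 0 < (1 + w' z).det := fun z hz =>
    det_one_add_pos (((hw' z hz).le_of_lipschitzOn (isOpen_ball.mem_nhds hz)
      (hw.mono ball_subset_closedBall)).trans_lt (by exact_mod_cast hk))
  have hinj : InjOn (fun z => z + w z) (ball 0 1) :=
    ((approximatesLinearOn_id_add hw).injOn (subsingleton_or_lt_inv_nnnorm_refl_symm hk)).mono
      ball_subset_closedBall
  have hvol := integral_image_eq_integral_abs_det_fderiv_smul μ measurableSet_ball
    (fun z hz => ((hasFDerivAt_id z).add (hw' z hz)).hasFDerivWithinAt) hinj (fun _ => (1 : ℝ))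
  calc ∫ z in ball (0 : E) 1, (1 + w' z).det ∂μ
      = ∫ z in ball (0 : E) 1, |(1 + w' z).det| • (1 : ℝ) ∂μ :=
        setIntegral_congr_fun measurableSet_ball fun z hz => by simp [abs_of_pos (hdet z hz)]
    _ = ∫ _ in (fun z => z + w z) '' ball (0 : E) 1, (1 : ℝ) ∂μ := hvol.symm
    _ = μ.real (ball 0 1) := by simp [image_id_add_ball hw hk hw0]

end LipschitzPerturbation

lemma setIntegral_det_one_add_of_infinite [FiniteDimensional ℝ E] [MeasurableSpace E]
    {μ : Measure E} {s : Set E} {D : E → E →L[ℝ] E}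
    (hD : ∀ t : ℝ, IntegrableOn (fun z => (1 + t • D z).det) s μ)
    {S : Set ℝ} (hS : S.Infinite) {c : ℝ} (hc : ∀ t ∈ S, ∫ z in s, (1 + t • D z).det ∂μ = c) :
    ∫ z in s, (1 + D z).det ∂μ = c := by
  obtain ⟨s', hs'S, hcard⟩ := hS.exists_subset_card_eq (Module.finrank ℝ E + 1)
  obtain ⟨l, hl⟩ := exists_eval_eq_sum_mul_eval s' 1
  have hl_sum : ∑ t ∈ s', l t = 1 := by
    simpa using (hl 1 (by rw [Polynomial.degree_one, hcard]; exact_mod_cast Nat.succ_pos _)).symm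
  have hdet : ∀ z, (1 + D z).det = ∑ t ∈ s', l t * (1 + t • D z).det := by
    intro z
    obtain ⟨p, hdeg, hp⟩ := exists_polynomial_eval_eq_det_add_smul 1 (D z : E →ₗ[ℝ] E)
    have hp' : ∀ t, p.eval t = (1 + t • D z).det := hp
    have h := hl p (Polynomial.degree_le_natDegree.trans_lt
      (by rw [hcard]; exact_mod_cast Nat.lt_succ_of_le hdeg))
    simpa only [hp', one_smul] using h
  calc ∫ z in s, (1 + D z).det ∂μ
      = ∫ z in s, ∑ t ∈ s', l t * (1 + t • D z).det ∂μ := by simp_rw [hdet]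
    _ = ∑ t ∈ s', l t * ∫ z in s, (1 + t • D z).det ∂μ := by
      rw [integral_finsetSum _ fun t _ => (hD t).const_mul (l t)]
      simp_rw [integral_const_mul]
    _ = ∑ t ∈ s', l t * c := Finset.sum_congr rfl fun t ht => by rw [hc t (hs'S ht)]
    _ = c := by rw [← Finset.sum_mul, hl_sum, one_mul]

end NormedSpace

lemma det_eq_zero_of_norm_eq_one {E : Type*} [NormedAddCommGroup E] [InnerProductSpace ℝ E]
    [FiniteDimensional ℝ E] {r : E → E} (hr : ∀ z, ‖r z‖ = 1) {r' : E →L[ℝ] E} {z : E}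
    (hr' : HasFDerivAt r r' z) : r'.det = 0 := by
  have hortho : ∀ v, inner ℝ (r z) (r' v) = 0 := by
    intro v
    have hconst : (fun y => ‖r y‖ ^ 2) = fun _ => (1 : ℝ) := by ext y; simp [hr]
    have h := hr'.norm_sq.unique (hconst ▸ hasFDerivAt_const (1 : ℝ) z)
    simpa using congrArg (fun L => L v) h
  by_contra hne
  obtain ⟨v, hv⟩ := (LinearMap.equivOfDetNeZero (r' : E →ₗ[ℝ] E) hne).surjective (r z)
  have h := hortho v
  rw [show r' v = r z from hv, real_inner_self_eq_norm_sq, hr] at h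
  norm_num at h

theorem not_exists_contDiff_retraction_sphere {E : Type*} [NormedAddCommGroup E]
    [InnerProductSpace ℝ E] [FiniteDimensional ℝ E] [Nontrivial E] :
    ¬ ∃ r : E → E, ContDiff ℝ 1 r ∧ (∀ z, ‖r z‖ = 1) ∧ ∀ z, ‖z‖ = 1 → r z = z := by
  rintro ⟨r, hr, hnorm, hsphere⟩
  borelize E
  let μ : Measure E := Measure.addHaar
  let u : E → E := fun z => r z - z
  have hu : ContDiff ℝ 1 u := hr.sub contDiff_id
  have hu' : ∀ z, HasFDerivAt u (fderiv ℝ u z) z := fun z =>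
    (hu.differentiable one_ne_zero z).hasFDerivAt
  have hDcont : Continuous (fderiv ℝ u) := hu.continuous_fderiv one_ne_zero
  obtain ⟨K, hK⟩ : ∃ K : ℝ≥0, LipschitzOnWith K u (closedBall 0 1) :=
    hu.contDiffOn.exists_lipschitzOnWith one_ne_zero (convex_closedBall 0 1)
      (isCompact_closedBall 0 1)
  have hint : ∀ t : ℝ, IntegrableOn (fun z => (1 + t • fderiv ℝ u z).det) (ball 0 1) μ := fun t =>
    ((ContinuousLinearMap.continuous_det.comp (by fun_prop)).continuousOn.integrableOn_compact
      (isCompact_closedBall 0 1)).mono_set ball_subset_closedBall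
  have hsmall : ∀ t ∈ Ioo (0 : ℝ) (K + 1)⁻¹,
      ∫ z in ball (0 : E) 1, (1 + t • fderiv ℝ u z).det ∂μ = μ.real (ball 0 1) := by
    rintro t ⟨ht0, htK⟩
    have hlip : LipschitzOnWith (‖t‖₊ * K) (fun z => t • u z) (closedBall 0 1) :=
      (lipschitzWith_smul t).comp_lipschitzOnWith hK
    have hk : ‖t‖₊ * K < 1 := by
      rw [← NNReal.coe_lt_coe]
      push_cast
      rw [Real.norm_of_nonneg ht0.le]
      calc t * K ≤ t * (K + 1) := by gcongr; linarith
        _ < 1 := (lt_inv_mul_iff₀' (by positivity)).1 (by simpa using htK)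
    exact setIntegral_ball_det_one_add hlip hk (fun z hz => by simp [u, hsphere z hz]) μ
      fun z _ => (hu' z).const_smul t
  have hvol : ∫ z in ball (0 : E) 1, (1 + fderiv ℝ u z).det ∂μ = μ.real (ball 0 1) :=
    setIntegral_det_one_add_of_infinite hint (Ioo_infinite (by positivity)) hsmall
  have hdet : ∀ z, (1 + fderiv ℝ u z).det = 0 := fun z =>
    det_eq_zero_of_norm_eq_one hnorm
      (((hasFDerivAt_id z).add (hu' z)).congr_of_eventuallyEq (.of_forall fun y => by simp [u]))
  have hpos : 0 < μ.real (ball (0 : E) 1) :=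
    ENNReal.toReal_pos (measure_ball_pos μ _ one_pos).ne' measure_ball_lt_top.ne
  simp only [hdet, integral_zero] at hvol
  exact hpos.ne hvol

end SmoothRetraction

section NonvanishingMaps

open Metric

section Zeros

variable {E : Type*} [NormedAddCommGroup E] [InnerProductSpace ℝ E] [FiniteDimensional ℝ E]

lemma exists_eq_zero_of_eq_self_of_le_norm {g : E → E} (hg : Continuous g) {R : ℝ}
    (hR : ∀ z, R ≤ ‖z‖ → g z = z) : ∃ z, g z = 0 := by
  rcases subsingleton_or_nontrivial E with hE | hE
  · exact ⟨0, Subsingleton.elim _ _⟩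
  by_contra! hne
  let S : ℝ := |R| + 1
  have hRS : R < S := (le_abs_self R).trans_lt (lt_add_one _)
  have hS : 0 < S := by positivity
  obtain ⟨G, hG, hGdist, hGeq, -⟩ := hg.exists_contDiff_approx_and_eqOn 1 hg.norm
    (fun z => norm_pos_iff.2 (hne z)) (S := {z : E | S ≤ ‖z‖}) (U := {z : E | R < ‖z‖})
    (isClosed_le continuous_const continuous_norm)
    ((isOpen_lt continuous_const continuous_norm).mem_nhdsSet.2 fun z hz => hRS.trans_le hz)
    (contDiffOn_id.congr fun z hz => hR z (le_of_lt hz))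
  have hGne : ∀ z, G z ≠ 0 := by
    intro z hz
    have h := hGdist z
    rw [hz, dist_zero_left] at h
    exact lt_irrefl _ h
  refine not_exists_contDiff_retraction_sphere
    (E := E) ⟨fun z => ‖G (S • z)‖⁻¹ • G (S • z), ?_, fun z => ?_, fun z hz => ?_⟩
  · have hGS : ContDiff ℝ 1 fun z => G (S • z) := hG.comp (contDiff_const_smul S)
    exact ((hGS.norm ℝ fun z => hGne _).inv fun z => norm_ne_zero_iff.2 (hGne _)).smul hGS
  · exact norm_smul_inv_norm (hGne _)
  · have hnorm : ‖S • z‖ = S := by rw [norm_smul, hz, mul_one, Real.norm_of_nonneg hS.le]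
    have hGz : G (S • z) = S • z := by
      rw [hGeq (show S • z ∈ {z : E | S ≤ ‖z‖} from hnorm.ge), hR _ (hRS.le.trans hnorm.ge)]
    simp only [hGz, hnorm, smul_smul, inv_mul_cancel₀ hS.ne', one_smul]

variable {p : E} {R : ℝ}

lemma exists_eq_zero_of_eq_sub_on_sphere (hR : 0 < R) {f : E → E}
    (hf : ContinuousOn f (closedBall p R)) (hs : ∀ z ∈ sphere p R, f z = z - p) :
    ∃ z ∈ closedBall p R, f z = 0 := by
  have hmem : ∀ z : E, ‖z‖ ≤ R → p + z ∈ closedBall p R := fun z hz => by simpa using hz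
  have hcont : Continuous fun z => if ‖z‖ ≤ R then f (p + z) else z :=
    continuous_if_le continuous_norm continuous_const
      (hf.comp (by fun_prop) hmem) continuousOn_id
      fun z hz => by rw [hs _ (by simpa using hz), add_sub_cancel_left]
  obtain ⟨z, hz⟩ := exists_eq_zero_of_eq_self_of_le_norm hcont (R := R) fun z hz => by
    rcases hz.eq_or_lt with hz | hz
    · rw [if_pos hz.ge, hs _ (by simpa using hz.symm), add_sub_cancel_left]
    · rw [if_neg hz.not_ge]
  split_ifs at hz with h
  · exact ⟨p + z, hmem z h, hz⟩
  · exact absurd (by simpa [hz] using hR.le) h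

lemma exists_eq_zero_of_norm_sub_le {r : ℝ} (hr0 : 0 ≤ r) (hr : r < R) {g : E → E}
    (hg : ContinuousOn g (closedBall p R))
    (hclose : ∀ z ∈ closedBall p R, ‖g z - (z - p)‖ ≤ r) : ∃ z ∈ closedBall p R, g z = 0 := by
  have hRr : 0 < R - r := sub_pos.2 hr
  let c : E → ℝ := fun z => min 1 ((R - ‖z - p‖) / (R - r))
  have hc_cont : Continuous c := by fun_prop
  have hc0 : ∀ z ∈ closedBall p R, 0 ≤ c z := fun z hz =>
    le_min zero_le_one (div_nonneg (sub_nonneg.2 (mem_closedBall_iff_norm.1 hz)) hRr.le)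
  obtain ⟨z, hz, hfz⟩ := exists_eq_zero_of_eq_sub_on_sphere (p := p) (hr0.trans_lt hr)
    (f := fun z => (z - p) + c z • (g z - (z - p)))
    (by have := hc_cont.continuousOn (s := closedBall p R); fun_prop)
    (fun z hz => by simp [c, mem_sphere_iff_norm.1 hz])
  have hnorm : ‖z - p‖ ≤ r := by
    rw [eq_neg_of_add_eq_zero_left hfz, norm_neg, norm_smul, Real.norm_of_nonneg (hc0 z hz)]
    exact (mul_le_of_le_one_left (norm_nonneg _) (min_le_left _ _)).trans (hclose z hz)
  have hc1 : c z = 1 := min_eq_left ((one_le_div hRr).2 (by linarith))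
  exact ⟨z, hz, by simpa [hc1] using hfz⟩

lemma finrank_le_of_injOn_closedBall {F : Type*} [NormedAddCommGroup F] [NormedSpace ℝ F]
    [FiniteDimensional ℝ F] (hR : 0 < R) {f : E → F} (hf : ContinuousOn f (closedBall p R))
    (hinj : InjOn f (closedBall p R)) : Module.finrank ℝ E ≤ Module.finrank ℝ F := by
  by_contra! hlt
  have : CompactSpace (closedBall p R) := isCompact_iff_compactSpace.1 (isCompact_closedBall p R)
  have : TietzeExtension E := RCLike.instTietzeExtensionTVS (𝕜 := ℝ)
  obtain ⟨G, hG⟩ := ContinuousMap.exists_extension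
    (hf.domRestrict.isClosedEmbedding hinj.injective) ⟨Subtype.val, continuous_subtype_val⟩
  have hGf : ∀ z ∈ closedBall p R, G (f z) = z := fun z hz => congrArg (fun φ => φ ⟨z, hz⟩) hG
  obtain ⟨H, hH, hHG, -⟩ := G.continuous.exists_contDiff_approx 1 (ε := fun _ => R / 4)
    continuous_const (fun _ => by positivity)
  obtain ⟨c, hc, hcp⟩ := (hH.dense_compl_range_of_finrank_lt_finrank hlt).exists_dist_lt p
    (show 0 < R / 4 by positivity)
  obtain ⟨z, -, hz⟩ := exists_eq_zero_of_norm_sub_le (p := p) (r := R / 4 + R / 4) (R := R)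
    (g := fun z => H (f z) - c) (by positivity) (by linarith)
    ((hH.continuous.comp_continuousOn hf).sub continuousOn_const) fun z hz => by
      have hHz := hHG (f z)
      rw [hGf z hz, dist_eq_norm] at hHz
      rw [dist_eq_norm] at hcp
      calc ‖H (f z) - c - (z - p)‖ = ‖(H (f z) - z) + (p - c)‖ := by congr 1; abel
        _ ≤ R / 4 + R / 4 := (norm_add_le _ _).trans (by gcongr)
  exact hc ⟨f z, sub_eq_zero.1 hz⟩

end Zeros

/-- The map `f` on `K` extends to a continuous nowhere vanishing map on `Y`. Separation arguments
detect a point `p` as an obstruction to extending `z ↦ z - p`. -/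
def ExtendsNonvanishing {X F : Type*} [TopologicalSpace X] [TopologicalSpace F] [Zero F]
    (f : X → F) (K Y : Set X) : Prop :=
  ∃ g : X → F, ContinuousOn g Y ∧ (∀ z ∈ Y, g z ≠ 0) ∧ EqOn g f K

lemma exists_continuousOn_union_of_isClosed {X Y : Type*} [TopologicalSpace X]
    [TopologicalSpace Y] {s t : Set X} (hs : IsClosed s) (ht : IsClosed t) {f g : X → Y}
    (hf : ContinuousOn f s) (hg : ContinuousOn g t) (hfg : EqOn f g (s ∩ t)) :
    ∃ h : X → Y, ContinuousOn h (s ∪ t) ∧ EqOn h f s ∧ EqOn h g t := by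
  classical
  have hs_eq : EqOn (s.piecewise f g) f s := piecewise_eqOn s f g
  have ht_eq : EqOn (s.piecewise f g) g t := by
    intro x hx
    by_cases hxs : x ∈ s
    · rw [piecewise_eq_of_mem _ _ _ hxs, hfg ⟨hxs, hx⟩]
    · exact piecewise_eq_of_notMem _ _ _ hxs
  exact ⟨s.piecewise f g, (hf.congr hs_eq).union_of_isClosed (hg.congr ht_eq) hs ht, hs_eq, ht_eq⟩

lemma exists_continuous_eqOn_of_isClosed {X F : Type*} [TopologicalSpace X] [NormalSpace X]
    [NormedAddCommGroup F] [NormedSpace ℝ F] [FiniteDimensional ℝ F] {s : Set X}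
    (hs : IsClosed s) {f : X → F} (hf : ContinuousOn f s) :
    ∃ g : X → F, Continuous g ∧ EqOn g f s := by
  have : TietzeExtension F := RCLike.instTietzeExtensionTVS (𝕜 := ℝ)
  obtain ⟨g, hg⟩ := ContinuousMap.exists_restrict_eq hs ⟨s.domRestrict f, hf.domRestrict⟩
  exact ⟨g, g.continuous, fun x hx => congrArg (fun φ => φ ⟨x, hx⟩) hg⟩

lemma ExtendsNonvanishing.of_homotopy {X F : Type*} [MetricSpace X] [NormedAddCommGroup F]
    [NormedSpace ℝ F] [FiniteDimensional ℝ F] {K Y : Set X} (hK : IsCompact K) (hY : IsClosed Y)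
    {H : X × ℝ → F} (hH : ContinuousOn H (K ×ˢ Icc 0 1))
    (hH0 : ∀ q ∈ K ×ˢ Icc (0 : ℝ) 1, H q ≠ 0)
    (h1 : ExtendsNonvanishing (fun z => H (z, 1)) K Y) :
    ExtendsNonvanishing (fun z => H (z, 0)) K Y := by
  obtain ⟨g₁, hg₁, hg₁0, hg₁H⟩ := h1
  have hcyl : IsClosed (K ×ˢ Icc (0 : ℝ) 1) := hK.isClosed.prod isClosed_Icc
  have htop : IsClosed (Y ×ˢ ({1} : Set ℝ)) := hY.prod isClosed_singleton
  obtain ⟨Φ, hΦ, hΦH, hΦg⟩ := exists_continuousOn_union_of_isClosed hcyl htop hH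
    (g := fun q => g₁ q.1) (hg₁.comp continuousOn_fst fun q hq => hq.1) (by
      rintro ⟨z, t⟩ ⟨hz, -, rfl : t = 1⟩
      exact (hg₁H hz.1).symm)
  obtain ⟨Ψ, hΨ, hΨΦ⟩ := exists_continuous_eqOn_of_isClosed (hcyl.union htop) hΦ
  obtain ⟨U, V, hU, -, hKU, hIV, hUV⟩ := generalized_tube_lemma hK
    (isCompact_Icc (a := (0 : ℝ)) (b := 1)) (isOpen_ne_fun hΨ continuous_const) fun q hq => by
      rw [mem_ofPred_eq, hΨΦ (Or.inl hq), hΦH hq]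
      exact hH0 q hq
  obtain ⟨u, hu0, hu1, hu⟩ := exists_continuous_zero_one_of_isClosed hK.isClosed hU.isClosed_compl
    (disjoint_compl_right_iff_subset.2 hKU)
  refine ⟨fun z => Ψ (z, u z), (hΨ.comp (by fun_prop)).continuousOn, fun z hz => ?_,
    fun z hz => ?_⟩
  · by_cases hzU : z ∈ U
    · exact hUV (mk_mem_prod hzU (hIV (hu z)))
    · have hmem : (z, (1 : ℝ)) ∈ Y ×ˢ ({1} : Set ℝ) := mk_mem_prod hz rfl
      simp only [show u z = 1 from hu1 hzU, hΨΦ (Or.inr hmem), hΦg hmem]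
      exact hg₁0 z hz
  · have hmem : (z, (0 : ℝ)) ∈ K ×ˢ Icc (0 : ℝ) 1 := mk_mem_prod hz (by simp)
    simp only [show u z = 0 from hu0 hz, hΨΦ (Or.inl hmem), hΦH hmem]

end NonvanishingMaps

section Separation

open Metric Topology Filter

variable {E F : Type*} [NormedAddCommGroup E] [InnerProductSpace ℝ E] [FiniteDimensional ℝ E]
  [NormedAddCommGroup F] [NormedSpace ℝ F]

lemma not_extendsNonvanishing_sub {O : Set E} (hO : IsOpen O) {p : E} (hp : p ∈ O) {R : ℝ}
    (hR : 0 < R) :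
    ¬ExtendsNonvanishing (fun z => z - p)
      ((closure O ∩ closedBall p R) \ O ∪ closure O ∩ closedBall p R ∩ sphere p R)
      (closure O ∩ closedBall p R) := by
  rintro ⟨g, hg, hg0, hgp⟩
  obtain ⟨f, hf, hfg, hfp⟩ := exists_continuousOn_union_of_isClosed
    (isClosed_closure.inter isClosed_closedBall) (isClosed_closedBall.inter hO.isClosed_compl) hg
    (g := fun z => z - p) (by fun_prop) fun z hz => hgp (Or.inl ⟨hz.1, hz.2.2⟩)
  have hcover : closedBall p R ⊆ closure O ∩ closedBall p R ∪ closedBall p R ∩ Oᶜ := fun z hz =>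
    (em (z ∈ O)).imp (fun h => ⟨subset_closure h, hz⟩) fun h => ⟨hz, h⟩
  obtain ⟨z, hz, hfz⟩ := exists_eq_zero_of_eq_sub_on_sphere hR (hf.mono hcover) fun z hz => by
    rcases hcover (sphere_subset_closedBall hz) with h | h
    · rw [hfg h, hgp (Or.inr ⟨h, hz⟩)]
    · exact hfp h
  rcases hcover hz with h | h
  · exact hg0 z h (hfg h ▸ hfz)
  · rw [hfp h, sub_eq_zero] at hfz
    exact h.2 (hfz ▸ hp)

-- If `y ∉ closure O`, then `z ↦ z - y` extends, and deforming `κ (·, 0) - y` through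
-- `κ (·, 1) - y` and `κ (·, 1) - p` into `κ (·, 0) - p` makes `z ↦ z - p` extend as well.
lemma mem_closure_of_homotopy {O : Set E} (hO : IsOpen O) {p y : E} (hp : p ∈ O) {R : ℝ}
    (hR : 0 < R) {κ : E × ℝ → E} {L C : Set E}
    (hL : L = (closure O ∩ closedBall p R) \ O ∪ closure O ∩ closedBall p R ∩ sphere p R)
    (hκ : ContinuousOn κ (L ×ˢ Icc 0 1)) (hκ0 : ∀ z ∈ L, κ (z, 0) = z)
    (hκp : ∀ q ∈ L ×ˢ Icc (0 : ℝ) 1, κ q ≠ p) (hκy : ∀ q ∈ L ×ˢ Icc (0 : ℝ) 1, κ q ≠ y)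
    (hC : Convex ℝ C) (hpC : p ∈ C) (hyC : y ∈ C) (hκC : ∀ z ∈ L, κ (z, 1) ∉ C) :
    y ∈ closure O := by
  by_contra hy
  have hYc : IsCompact (closure O ∩ closedBall p R) :=
    (isCompact_closedBall p R).inter_left isClosed_closure
  have hLc : IsCompact L := hL ▸ (hYc.diff hO).union (hYc.inter_right isClosed_sphere)
  have hrev : MapsTo (fun q : E × ℝ => (q.1, 1 - q.2)) (L ×ˢ Icc 0 1) (L ×ˢ Icc 0 1) :=
    fun q hq => ⟨hq.1, Icc.mem_iff_one_sub_mem.1 hq.2⟩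
  have hend : MapsTo (fun q : E × ℝ => (q.1, (1 : ℝ))) (L ×ˢ Icc 0 1) (L ×ˢ Icc 0 1) :=
    fun q hq => ⟨hq.1, right_mem_Icc.2 zero_le_one⟩
  have hκ1y : ExtendsNonvanishing (fun z => κ (z, 1) - y) L (closure O ∩ closedBall p R) := by
    have := ExtendsNonvanishing.of_homotopy hLc hYc.isClosed (H := fun q => κ (q.1, 1 - q.2) - y)
      ((hκ.comp (by fun_prop) hrev).sub continuousOn_const)
      (fun q hq => sub_ne_zero.2 (hκy _ (hrev hq)))
      ⟨fun z => z - y, by fun_prop, fun z hz h => hy (sub_eq_zero.1 h ▸ hz.1),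
        fun z hz => by simp only [sub_self, hκ0 z hz]⟩
    simpa only [sub_zero] using this
  have hκ1p : ExtendsNonvanishing (fun z => κ (z, 1) - p) L (closure O ∩ closedBall p R) := by
    have := ExtendsNonvanishing.of_homotopy hLc hYc.isClosed
      (H := fun q => κ (q.1, 1) - (p + q.2 • (y - p)))
      ((hκ.comp (by fun_prop) hend).sub (by fun_prop))
      (fun q hq h => hκC q.1 hq.1 (sub_eq_zero.1 h ▸ hC.add_smul_sub_mem hpC hyC hq.2))
      (by simpa only [one_smul, add_sub_cancel] using hκ1y)
    simpa only [zero_smul, add_zero] using this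
  obtain ⟨g, hg, hg0, hgκ⟩ := ExtendsNonvanishing.of_homotopy hLc hYc.isClosed
    (H := fun q => κ q - p) (hκ.sub continuousOn_const) (fun q hq => sub_ne_zero.2 (hκp q hq)) hκ1p
  exact not_extendsNonvanishing_sub hO hp hR
    ⟨g, hg, hg0, hL ▸ fun z hz => (hgκ hz).trans (by simp only [hκ0 z hz])⟩

/-- The radial homotopy of `F` minus the point `a` that, at time `t`, pushes everything out of the
ball of radius `t * r` around `a`. -/
def pushAway (a : F) (r t : ℝ) (w : F) : F :=
  a + (max ‖w - a‖ (t * r) / ‖w - a‖) • (w - a)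

section pushAway

variable {a w : F} {r t : ℝ}

lemma norm_pushAway_sub (hw : w ≠ a) : ‖pushAway a r t w - a‖ = max ‖w - a‖ (t * r) := by
  have hwa : ‖w - a‖ ≠ 0 := norm_sub_eq_zero_iff.not.2 hw
  rw [pushAway, add_sub_cancel_left, norm_smul, norm_div, norm_norm, div_mul_cancel₀ _ hwa,
    Real.norm_of_nonneg (le_max_of_le_left (norm_nonneg _))]

lemma pushAway_ne (hw : w ≠ a) : pushAway a r t w ≠ a := by
  rw [← sub_ne_zero, ← norm_pos_iff, norm_pushAway_sub hw]
  exact lt_max_of_lt_left (norm_sub_pos_iff.2 hw)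

lemma pushAway_eq_self (hw : w ≠ a) (h : t * r ≤ ‖w - a‖) : pushAway a r t w = w := by
  rw [pushAway, max_eq_left h, div_self (norm_sub_eq_zero_iff.not.2 hw), one_smul, add_sub_cancel]

lemma pushAway_mem {s : Set F} (hs : closedBall a r ⊆ s) (hr : 0 ≤ r) (hw : w ≠ a) (hws : w ∈ s)
    (ht : t ≤ 1) : pushAway a r t w ∈ s := by
  rcases le_total (t * r) ‖w - a‖ with h | h
  · rwa [pushAway_eq_self hw h]
  · refine hs (mem_closedBall_iff_norm.2 ?_)
    rw [norm_pushAway_sub hw, max_eq_right h]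
    exact mul_le_of_le_one_left hr ht

lemma continuousOn_pushAway (a : F) (r : ℝ) :
    ContinuousOn (fun q : F × ℝ => pushAway a r q.2 q.1) ({a}ᶜ ×ˢ univ) := by
  refine continuousOn_const.add (ContinuousOn.smul (.div ?_ ?_ ?_) ?_)
  · fun_prop
  · fun_prop
  · exact fun q hq => norm_sub_eq_zero_iff.not.2 hq.1
  · fun_prop

end pushAway

/-- `κ` is a homotopy of `M \ {y}` within itself which starts at the identity, moves only points
of `U`, and ends outside `W`. -/
structure IsPushOff {X : Type*} [TopologicalSpace X] (κ : X × ℝ → X) (M : Set X) (y : X)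
    (U W : Set X) : Prop where
  continuousOn : ContinuousOn κ ((M \ {y}) ×ˢ Icc 0 1)
  mapsTo : MapsTo κ ((M \ {y}) ×ˢ Icc 0 1) (M \ {y})
  zero : ∀ z ∈ M \ {y}, κ (z, 0) = z
  eq_self : ∀ z ∈ M \ {y}, z ∉ U → ∀ t ∈ Icc (0 : ℝ) 1, κ (z, t) = z
  one_notMem : ∀ z ∈ M \ {y}, κ (z, 1) ∉ W

lemma isPushOff_chart {X : Type*} [TopologicalSpace X] (e : PartialHomeomorph X F) {y : X}
    (hy : y ∈ e.source) {r : ℝ} (hr : 0 ≤ r) {U W : Set X}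
    (hball : closedBall (e y) r ⊆ e.target ∩ e.symm ⁻¹' U)
    (hW : MapsTo e (e.source ∩ W) (ball (e y) r)) :
    IsPushOff (fun q => e.symm (pushAway (e y) r q.2 (e q.1))) e.source y U W := by
  have hne : ∀ z ∈ e.source \ {y}, e z ≠ e y := fun z hz h => hz.2 (e.injOn hz.1 hy h)
  have htarget : ∀ q ∈ (e.source \ {y}) ×ˢ Icc (0 : ℝ) 1,
      pushAway (e y) r q.2 (e q.1) ∈ e.target := fun q hq =>
    pushAway_mem (hball.trans inter_subset_left) hr (hne _ hq.1) (e.map_source hq.1.1) hq.2.2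
  have hfix : ∀ z ∈ e.source \ {y}, ∀ t : ℝ, t * r ≤ ‖e z - e y‖ →
      e.symm (pushAway (e y) r t (e z)) = z := fun z hz t h => by
    rw [pushAway_eq_self (hne z hz) h, e.left_inv hz.1]
  refine ⟨?_, fun q hq => ⟨e.map_target (htarget q hq), fun h => ?_⟩, fun z hz => ?_,
    fun z hz hzU t ht => ?_, fun z hz hzW => ?_⟩
  · refine e.continuousOn_symm.comp ?_ htarget
    refine (continuousOn_pushAway (e y) r).comp (f := fun q : X × ℝ => (e q.1, q.2))
      (.prodMk ?_ continuousOn_snd) fun q hq => ⟨hne _ hq.1, mem_univ _⟩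
    exact e.continuousOn.comp continuousOn_fst fun q hq => hq.1.1
  · refine pushAway_ne (r := r) (t := q.2) (hne _ hq.1) ?_
    rw [← e.right_inv (htarget q hq), mem_singleton_iff.1 h]
  · exact hfix z hz 0 (by simp)
  · refine hfix z hz t (le_of_not_gt fun h => hzU ?_)
    have hez := (hball (mem_closedBall_iff_norm.2 (h.le.trans (mul_le_of_le_one_left hr ht.2)))).2
    rwa [mem_preimage, e.left_inv hz.1] at hez
  · have htar := htarget (z, 1) ⟨hz, right_mem_Icc.2 zero_le_one⟩
    have hmem := hW ⟨e.map_target htar, hzW⟩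
    rw [e.right_inv htar, mem_ball_iff_norm, norm_pushAway_sub (hne z hz), one_mul] at hmem
    exact (le_max_right _ _).not_gt hmem

lemma exists_isPushOff {X : Type*} [TopologicalSpace X] (e : PartialHomeomorph X F)
    (he : IsOpen e.target) {x : X} (hx : x ∈ e.source) {U : Set X} (hU : U ∈ 𝓝 x) :
    ∃ W ∈ 𝓝 x, ∀ y ∈ e.source ∩ W, ∃ κ, IsPushOff κ e.source y U W := by
  have hUe : e.target ∩ e.symm ⁻¹' U ∈ 𝓝 (e x) := by
    have hx' := e.map_source hx
    refine inter_mem (he.mem_nhds hx') ((e.continuousOn_symm.continuousAt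
      (he.mem_nhds hx')).preimage_mem_nhds ?_)
    rwa [e.left_inv hx]
  obtain ⟨s, hs, hsU⟩ := Metric.mem_nhds_iff.1 hUe
  obtain ⟨W, hW, hWs⟩ := mem_nhdsWithin_iff_exists_mem_nhds_inter.1
    (e.continuousOn x hx (ball_mem_nhds (e x) (show 0 < s / 4 by positivity)))
  refine ⟨W, hW, fun y hy => ⟨_, isPushOff_chart e hy.1 (r := s / 2) (by positivity)
    (fun w hw => hsU ?_) fun z hz => ?_⟩⟩
  all_goals
    have hye : dist (e y) (e x) < s / 4 := hWs hy.symm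
  · have := dist_triangle w (e y) (e x)
    rw [mem_closedBall] at hw
    rw [mem_ball]
    linarith
  · have hze : dist (e z) (e x) < s / 4 := hWs hz.symm
    have := dist_triangle_right (e z) (e y) (e x)
    rw [mem_ball]
    linarith

lemma IsPushOff.exists_extend {X : Type*} [TopologicalSpace X] {κ : X × ℝ → X} {M U W K S : Set X}
    {y : X} (hκ : IsPushOff κ M y U W) (hK : IsClosed K) (hS : IsClosed S) (hKM : K ⊆ M \ {y})
    (hSU : Disjoint S U) :
    ∃ κ' : X × ℝ → X, ContinuousOn κ' ((K ∪ S) ×ˢ Icc 0 1) ∧ EqOn κ' κ (K ×ˢ Icc 0 1) ∧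
      EqOn κ' Prod.fst (S ×ˢ Icc 0 1) := by
  rw [union_prod]
  refine exists_continuousOn_union_of_isClosed (hK.prod isClosed_Icc) (hS.prod isClosed_Icc)
    (hκ.continuousOn.mono (prod_mono_left hKM)) continuousOn_fst ?_
  rintro ⟨z, t⟩ ⟨⟨hzK, ht⟩, hzS, -⟩
  exact hκ.eq_self z (hKM hzK) (disjoint_left.1 hSU hzS) t ht

lemma mem_closure_of_isPushOff {O : Set E} (hO : IsOpen O) {p y : E} (hp : p ∈ O) {R : ℝ}
    (hR : 0 < R) {κ₀ : E × ℝ → E} {M U W C : Set E} (hκ₀ : IsPushOff κ₀ M y U W) (hpM : p ∉ M)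
    (hM : (closure O ∩ closedBall p R) \ O ⊆ M) (hU : Disjoint (sphere p R) U) (hC : Convex ℝ C)
    (hpC : p ∈ C) (hyC : y ∈ C) (hCW : C ⊆ W) (hCp : Disjoint (sphere p R) C) :
    y ∈ closure O := by
  by_contra hy
  have hYc : IsClosed (closure O ∩ closedBall p R) := isClosed_closure.inter isClosed_closedBall
  have hKM : (closure O ∩ closedBall p R) \ O ⊆ M \ {y} := fun z hz =>
    ⟨hM hz, fun h => hy ((show z = y from h) ▸ hz.1.1)⟩
  obtain ⟨κ, hκ, hκK, hκS⟩ := hκ₀.exists_extend (hYc.sdiff hO) (hYc.inter isClosed_sphere) hKM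
    (hU.mono_left inter_subset_right)
  have hI₀ : (0 : ℝ) ∈ Icc (0 : ℝ) 1 := left_mem_Icc.2 zero_le_one
  have hI₁ : (1 : ℝ) ∈ Icc (0 : ℝ) 1 := right_mem_Icc.2 zero_le_one
  refine hy (mem_closure_of_homotopy hO hp hR rfl hκ ?_ ?_ ?_ hC hpC hyC ?_)
  · rintro z (hz | hz)
    · rw [hκK ⟨hz, hI₀⟩, hκ₀.zero z (hKM hz)]
    · rw [hκS ⟨hz, hI₀⟩]
  · rintro ⟨z, t⟩ ⟨hz | hz, ht⟩ h
    · rw [hκK ⟨hz, ht⟩] at h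
      exact hpM (h ▸ (hκ₀.mapsTo ⟨hKM hz, ht⟩).1)
    · rw [hκS ⟨hz, ht⟩] at h
      exact ne_of_mem_sphere hz.2 hR.ne' h
  · rintro ⟨z, t⟩ ⟨hz | hz, ht⟩ h
    · rw [hκK ⟨hz, ht⟩] at h
      exact (hκ₀.mapsTo ⟨hKM hz, ht⟩).2 h
    · rw [hκS ⟨hz, ht⟩] at h
      exact hy ((show z = y from h) ▸ hz.1.1)
  · rintro z (hz | hz) h
    · rw [hκK ⟨hz, hI₁⟩] at h
      exact hκ₀.one_notMem z (hKM hz) (hCW h)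
    · rw [hκS ⟨hz, hI₁⟩] at h
      exact disjoint_left.1 hCp hz.2 h

lemma closure_mem_nhdsWithin_chart_source {O : Set E} (hO : IsOpen O) (e : PartialHomeomorph E F)
    (he : IsOpen e.target) (hdisj : Disjoint O e.source) {x : E} (hx : x ∈ e.source)
    (hxO : x ∈ closure O) (hloc : ∀ᶠ z in 𝓝 x, z ∈ closure O → z ∈ O ∪ e.source) :
    closure O ∈ 𝓝[e.source] x := by
  obtain ⟨R, hR, hRloc⟩ := Metric.eventually_nhds_iff_ball.1 hloc
  obtain ⟨W, hW, hpush⟩ := exists_isPushOff e he hx (ball_mem_nhds x (show 0 < R / 2 by positivity))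
  obtain ⟨r, hr, hrW⟩ := Metric.mem_nhds_iff.1
    (inter_mem hW (ball_mem_nhds x (show 0 < R / 8 by positivity)))
  filter_upwards [mem_nhdsWithin_of_mem_nhds (ball_mem_nhds x hr), self_mem_nhdsWithin]
    with y hyr hye
  obtain ⟨p, hpr, hpO⟩ := mem_closure_iff_nhds.1 hxO _ (ball_mem_nhds x hr)
  obtain ⟨κ, hκ⟩ := hpush y ⟨hye, (hrW hyr).1⟩
  have hpx : dist p x < R / 8 := (hrW hpr).2
  have hsphere : ∀ z ∈ sphere p (3 * R / 4), R / 2 ≤ dist z x := fun z hz => by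
    have := dist_triangle_right z p x
    rw [mem_sphere] at hz
    linarith
  have hball : ∀ z ∈ closedBall p (3 * R / 4), dist z x < R := fun z hz => by
    have := dist_triangle z p x
    rw [mem_closedBall] at hz
    linarith
  refine mem_closure_of_isPushOff hO hpO (show 0 < 3 * R / 4 by positivity) hκ
    (disjoint_left.1 hdisj hpO)
    (fun z hz => (hRloc z (hball z hz.1.2) hz.1.1).resolve_left hz.2)
    (disjoint_left.2 fun z hz h => (hsphere z hz).not_gt h) (convex_ball x r) hpr hyr
    (hrW.trans inter_subset_left) (disjoint_left.2 fun z hz h => ?_)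
  have hzx : dist z x < R / 8 := (hrW h).2
  linarith [hsphere z hz]

end Separation

section RelativelyOpen

open Topology Filter

variable {E : Type*} [TopologicalSpace E] {O S X Y : Set E}

/-- `O` is a neighbourhood of each of its points within `X`. For `O ⊆ X` this says that `O` is open
in the subspace `X`. -/
def RelOpen (O X : Set E) : Prop :=
  ∀ x ∈ O, O ∈ 𝓝[X] x

namespace RelOpen

lemma refl (X : Set E) : RelOpen X X := fun _ _ => self_mem_nhdsWithin

lemma mono_right (hO : RelOpen O X) (hYX : Y ⊆ X) : RelOpen O Y := fun x hx =>
  nhdsWithin_mono x hYX (hO x hx)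

lemma inter (hO : RelOpen O X) (hS : RelOpen S X) : RelOpen (O ∩ S) X := fun x hx =>
  inter_mem (hO x hx.1) (hS x hx.2)

lemma trans (hSO : RelOpen S O) (hO : RelOpen O X) (hsub : S ⊆ O) : RelOpen S X := fun x hx =>
  nhdsWithin_le_of_mem (hO x (hsub hx)) (hSO x hx)

lemma sdiff_of_isClosed (X : Set E) (hS : IsClosed S) : RelOpen (X \ S) X := fun _ hx =>
  inter_mem self_mem_nhdsWithin (mem_nhdsWithin_of_mem_nhds (hS.isOpen_compl.mem_nhds hx.2))

lemma isOpen_preimage_val (hO : RelOpen O X) : IsOpen (Subtype.val ⁻¹' O : Set X) :=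
  isOpen_iff_mem_nhds.2 fun x hx => preimage_coe_mem_nhds_subtype.2 (hO x hx)

lemma eq_empty_or_eq_of_isPreconnected (hX : IsPreconnected X) (hSX : S ⊆ X) (hS : RelOpen S X)
    (hSc : RelOpen (X \ S) X) : S = ∅ ∨ S = X := by
  have := isPreconnected_iff_preconnectedSpace.1 hX
  have hclosed : IsClosed (Subtype.val ⁻¹' S : Set X) := by
    rw [← isOpen_compl_iff]
    convert hSc.isOpen_preimage_val using 1
    ext x
    simp
  refine (isClopen_iff.1 ⟨hclosed, hS.isOpen_preimage_val⟩).imp (fun h => ?_) fun h => ?_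
  · rwa [Subtype.preimage_coe_eq_empty, inter_eq_right.2 hSX] at h
  · exact hSX.antisymm fun x hx => (h ▸ mem_univ (⟨x, hx⟩ : X) :)

end RelOpen

lemma frequently_mem_nhdsWithin {x : E} (hx : x ∈ closure S) (hSX : S ⊆ X) :
    ∃ᶠ y in 𝓝[X] x, y ∈ S :=
  frequently_nhdsWithin_iff.2 ((mem_closure_iff_frequently.1 hx).mono fun _ hy => ⟨hy, hSX hy⟩)

lemma RelOpen.mem_closure_inter (hO : RelOpen O X) (hSX : S ⊆ X) {x : E} (hxO : x ∈ O)
    (hx : x ∈ closure S) : x ∈ closure (O ∩ S) :=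
  mem_closure_iff_frequently.2 <| ((frequently_mem_nhdsWithin hx hSX).and_eventually
    (hO x hxO)).filter_mono nhdsWithin_le_nhds |>.mono fun _ hy => hy.symm

lemma RelOpen.closure_subset_closure_inter (hO : RelOpen O X) (hOX : O ⊆ X) (hSX : S ⊆ X)
    (hXS : X ⊆ closure S) : closure O ⊆ closure (O ∩ S) :=
  closure_minimal (fun _ hx => hO.mem_closure_inter hSX hx (hXS (hOX hx))) isClosed_closure

end RelativelyOpen

section AmbientCharts

open Topology Filter

variable {E H H' : Type*} [TopologicalSpace E] [TopologicalSpace H] [TopologicalSpace H']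

/-- The composition of two partial homeomorphisms, on the largest set where it makes sense. -/
def transPartialHomeomorph (e : PartialHomeomorph E H) (e' : PartialHomeomorph H H') :
    PartialHomeomorph E H' where
  toPartialEquiv := e.toPartialEquiv.trans e'.toPartialEquiv
  continuousOn_toFun := e'.continuousOn.comp (e.continuousOn.mono inter_subset_left)
    fun _ hx => hx.2
  continuousOn_invFun := e.continuousOn_symm.comp (e'.continuousOn_symm.mono inter_subset_left)
    fun _ hx => hx.2

/-- `e` is a chart of the subspace `X`, as a partial homeomorphism of the ambient space. -/
structure IsAmbientChart (e : PartialHomeomorph E H) (X : Set E) : Prop where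
  source_subset : e.source ⊆ X
  relOpen_source : RelOpen e.source X
  isOpen_target : IsOpen e.target

lemma exists_isAmbientChart {X : Set E} [ChartedSpace H X] {x : E} (hx : x ∈ X) :
    ∃ e : PartialHomeomorph E H, IsAmbientChart e X ∧ x ∈ e.source := by
  let a := chartAt H (⟨x, hx⟩ : X)
  let b := (X.partialHomeomorphSubtypeCoe ⟨x, hx⟩).symm
  have hb : ∀ y (hy : y ∈ X), b y = ⟨y, hy⟩ := fun y hy =>
    Subtype.ext ((X.partialHomeomorphSubtypeCoe ⟨x, hx⟩).right_inv (by simpa using hy))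
  have hbs : b.source = X := by simp [b]
  have hsource : (transPartialHomeomorph b a.toPartialHomeomorph).source = X ∩ b ⁻¹' a.source :=
    congrArg (· ∩ b ⁻¹' a.source) hbs
  refine ⟨transPartialHomeomorph b a.toPartialHomeomorph, ⟨?_, ?_, ?_⟩, ?_⟩
  · exact hsource ▸ inter_subset_left
  · rw [hsource]
    refine fun y hy => inter_mem self_mem_nhdsWithin ?_
    have hcont := b.continuousOn y (hbs.symm ▸ hy.1)
    rw [hbs] at hcont
    exact hcont (a.open_source.mem_nhds hy.2)
  · exact a.continuousOn_symm.isOpen_inter_preimage a.open_target isOpen_univ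
  · rw [hsource]
    refine ⟨hx, ?_⟩
    rw [mem_preimage, hb x hx]
    exact mem_chart_source H _

variable {e : PartialHomeomorph E H} {d : PartialHomeomorph E H'} {O X Z : Set E} {x : E}

namespace IsAmbientChart

lemma tendsto_symm (he : IsAmbientChart e X) {v : H} (hv : v ∈ e.target) :
    Tendsto e.symm (𝓝 v) (𝓝[X] e.symm v) := by
  have hmem := he.isOpen_target.mem_nhds hv
  refine tendsto_nhdsWithin_iff.2 ⟨e.continuousOn_symm.continuousAt hmem, ?_⟩
  filter_upwards [hmem] with w hw using he.source_subset (e.map_target hw)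

lemma tendsto (he : IsAmbientChart e X) (hx : x ∈ e.source) : Tendsto e (𝓝[X] x) (𝓝 (e x)) :=
  (e.continuousOn x hx).mono_left (nhdsWithin_le_of_mem (he.relOpen_source x hx))

lemma isOpen_target_inter_preimage (he : IsAmbientChart e X) (hO : RelOpen O X) :
    IsOpen (e.target ∩ e.symm ⁻¹' O) :=
  isOpen_iff_mem_nhds.2 fun _ hv =>
    inter_mem (he.isOpen_target.mem_nhds hv.1) (he.tendsto_symm hv.1 (hO _ hv.2))

lemma symm_trans (he : IsAmbientChart e X) (hd : IsAmbientChart d Z) (hZX : Z ⊆ X) :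
    IsOpen (transPartialHomeomorph e.symm d).target :=
  hd.isOpen_target_inter_preimage (he.relOpen_source.mono_right hZX)

lemma symm_mem_closure (he : IsAmbientChart e X) {v : H} (hv : v ∈ e.target)
    (hvO : v ∈ closure (e.target ∩ e.symm ⁻¹' O)) : e.symm v ∈ closure O :=
  mem_closure_iff_frequently.2 <| ((he.tendsto_symm hv).frequently
    ((mem_closure_iff_frequently.1 hvO).mono fun _ hw => hw.2)).filter_mono nhdsWithin_le_nhds

lemma map_mem_closure (he : IsAmbientChart e X) (hx : x ∈ e.source) (hOX : O ⊆ X)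
    (hxO : x ∈ closure O) : e x ∈ closure (e.target ∩ e.symm ⁻¹' O) := by
  refine mem_closure_iff_frequently.2 ((he.tendsto hx).frequently ?_)
  refine ((frequently_mem_nhdsWithin hxO hOX).and_eventually (he.relOpen_source x hx)).mono ?_
  rintro y ⟨hyO, hy⟩
  exact ⟨e.map_source hy, by rwa [mem_preimage, e.left_inv hy]⟩

end IsAmbientChart

end AmbientCharts

section Dimension

open Topology Filter Metric

lemma finrank_le_of_relOpen {E H H' : Type*} [TopologicalSpace E] [NormedAddCommGroup H]
    [NormedSpace ℝ H] [FiniteDimensional ℝ H] [NormedAddCommGroup H'] [InnerProductSpace ℝ H']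
    [FiniteDimensional ℝ H'] {S S' O : Set E} [ChartedSpace H S] [ChartedSpace H' S']
    (hO : O.Nonempty) (hOS : O ⊆ S) (hOS' : O ⊆ S') (hrel : RelOpen O S') :
    Module.finrank ℝ H' ≤ Module.finrank ℝ H := by
  obtain ⟨x, hx⟩ := hO
  obtain ⟨c, hc, hxc⟩ := exists_isAmbientChart (H := H) (hOS hx)
  obtain ⟨d, hd, hxd⟩ := exists_isAmbientChart (H := H') (hOS' hx)
  have hcO : RelOpen (c.source ∩ O) S' :=
    ((hc.relOpen_source.mono_right hOS).inter (.refl O)).trans hrel inter_subset_right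
  obtain ⟨R, hR, hball⟩ := nhds_basis_closedBall.mem_iff.1
    ((hd.isOpen_target_inter_preimage hcO).mem_nhds
      (show d x ∈ _ from ⟨d.map_source hxd, by rw [mem_preimage, d.left_inv hxd]; exact ⟨hxc, hx⟩⟩))
  have hsource : closedBall (d x) R ⊆ (transPartialHomeomorph d.symm c).source := fun v hv =>
    ⟨(hball hv).1, (hball hv).2.1⟩
  exact finrank_le_of_injOn_closedBall hR
    ((transPartialHomeomorph d.symm c).continuousOn.mono hsource)
    ((transPartialHomeomorph d.symm c).injOn.mono hsource)

lemma closure_mem_nhdsWithin_of_charted {E H H' : Type*} [TopologicalSpace E]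
    [NormedAddCommGroup H] [InnerProductSpace ℝ H] [FiniteDimensional ℝ H] [NormedAddCommGroup H']
    [NormedSpace ℝ H'] {X Z O : Set E} {x : E} (cX : ChartedSpace H X) (cZ : ChartedSpace H' Z)
    (hZX : Z ⊆ X) (hOX : O ⊆ X) (hO : RelOpen O X)
    (hdisj : Disjoint O Z) (hxZ : x ∈ Z) (hxO : x ∈ closure O)
    (hloc : ∀ᶠ z in 𝓝[X] x, z ∈ closure O → z ∈ O ∪ Z) : closure O ∈ 𝓝[Z] x := by
  obtain ⟨c, hc, hxc⟩ := exists_isAmbientChart (H := H) (hZX hxZ)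
  obtain ⟨d, hd, hxd⟩ := exists_isAmbientChart (H := H') hxZ
  let e := transPartialHomeomorph c.symm d
  have hsource : ∀ {z}, z ∈ c.source → z ∈ d.source → c z ∈ e.source := fun hzc hzd =>
    ⟨c.map_source hzc, show c.symm (c _) ∈ d.source by rwa [c.left_inv hzc]⟩
  have hdx : ∀ᶠ z in 𝓝[X] x, z ∈ Z → z ∈ d.source := by
    have hd' : ∀ᶠ z in 𝓝[Z] x, z ∈ d.source := hd.relOpen_source x hxd
    exact (eventually_nhdsWithin_iff.1 hd').filter_mono nhdsWithin_le_nhds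
  have hclosure := closure_mem_nhdsWithin_chart_source (hc.isOpen_target_inter_preimage hO) e
    (hc.symm_trans hd hZX)
    (disjoint_left.2 fun v hv hve => disjoint_left.1 hdisj hv.2 (hd.source_subset hve.2))
    (x := c x) (hsource hxc hxd) (hc.map_mem_closure hxc hOX hxO) (by
      have := hc.tendsto_symm (c.map_source hxc)
      rw [c.left_inv hxc] at this
      filter_upwards [this.eventually (hloc.and hdx), hc.isOpen_target.mem_nhds (c.map_source hxc)]
        with v hv hvc hvO
      exact (hv.1 (hc.symm_mem_closure hvc hvO)).imp (fun h => ⟨hvc, h⟩) fun h => ⟨hvc, hv.2 h⟩)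
  have htend : Tendsto c (𝓝[Z] x) (𝓝[e.source] c x) := by
    refine tendsto_nhdsWithin_iff.2 ⟨(hc.tendsto hxc).mono_left (nhdsWithin_mono x hZX), ?_⟩
    filter_upwards [hd.relOpen_source x hxd, nhdsWithin_mono x hZX (hc.relOpen_source x hxc)]
      with z hzd hzc
    exact hsource hzc hzd
  filter_upwards [htend hclosure, nhdsWithin_mono x hZX (hc.relOpen_source x hxc)] with z hz hzc
  rw [← c.left_inv hzc]
  exact hc.symm_mem_closure (c.map_source hzc) hz

variable {N i j : ℕ} {X Z S O : Set (Euc N)}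

namespace IsSimanifold

lemma isPreconnected (hX : IsSimanifold i X) : IsPreconnected X := by
  have := hX.2.1
  exact isPreconnected_iff_preconnectedSpace.2 inferInstance

lemma le_of_relOpen (hS : IsSimanifold i S) (hX : IsSimanifold j X) (hO : O.Nonempty)
    (hOS : O ⊆ S) (hOX : O ⊆ X) (hrel : RelOpen O X) : j ≤ i := by
  obtain ⟨-, -, ⟨cS⟩⟩ := hS
  obtain ⟨-, -, ⟨cX⟩⟩ := hX
  simpa only [finrank_euclideanSpace_fin] using finrank_le_of_relOpen
    (H := EuclideanSpace ℝ (Fin i)) (H' := EuclideanSpace ℝ (Fin j)) hO hOS hOX hrel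

lemma exists_subset_of_relOpen (hX : IsSimanifold i X) (hO : O.Nonempty) (hOX : O ⊆ X)
    (hrel : RelOpen O X) : ∃ M ⊆ O, IsSimanifold i M := by
  obtain ⟨-, -, ⟨cX⟩⟩ := hX
  obtain ⟨x, hx⟩ := hO
  obtain ⟨c, hc, hxc⟩ := exists_isAmbientChart (H := EuclideanSpace ℝ (Fin i)) (hOX hx)
  obtain ⟨r, hr, hball⟩ := Metric.isOpen_iff.1 (hc.isOpen_target_inter_preimage hrel) (c x)
    ⟨c.map_source hxc, by rwa [mem_preimage, c.left_inv hxc]⟩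
  let φ : ball (c x) r ≃ₜ c.symm '' ball (c x) r :=
    c.symm.homeomorphOfImageSubsetSource (hball.trans inter_subset_left) rfl
  have hne : (ball (c x) r).Nonempty := ⟨c x, mem_ball_self hr⟩
  have : ContractibleSpace (ball (c x) r) := (convex_ball (c x) r).contractibleSpace hne
  have : Nonempty (c.symm '' ball (c x) r) := (hne.image _).to_subtype
  refine ⟨c.symm '' ball (c x) r, image_subset_iff.2 fun v hv => (hball hv).2, hne.image _,
    φ.symm.contractibleSpace, ⟨?_⟩⟩
  exact (isOpen_ball.isOpenEmbedding_subtypeVal.comp φ.symm.isOpenEmbedding).singletonChartedSpace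

lemma sdim_eq_of_relOpen (hX : IsSimanifold i X) (hO : O.Nonempty) (hOX : O ⊆ X)
    (hrel : RelOpen O X) : sdim O = i := by
  have hle : ∀ j ∈ {j | ∃ M : Set (Euc N), IsSimanifold j M ∧ M ⊆ O}, j ≤ i := by
    rintro j ⟨M, hM, hMO⟩
    exact hX.le_of_relOpen hM hM.1 (hMO.trans hOX) le_rfl (.refl M)
  obtain ⟨M, hMO, hM⟩ := hX.exists_subset_of_relOpen hO hOX hrel
  exact le_antisymm (csSup_le ⟨i, M, hM, hMO⟩ hle) (le_csSup ⟨i, hle⟩ ⟨M, hM, hMO⟩)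

lemma sdim_eq (hX : IsSimanifold i X) : sdim X = i :=
  hX.sdim_eq_of_relOpen hX.1 le_rfl (.refl X)

lemma closure_mem_nhdsWithin (hX : IsSimanifold i X) (hZ : IsSimanifold j Z) (hZX : Z ⊆ X)
    (hOX : O ⊆ X) (hO : RelOpen O X) (hdisj : Disjoint O Z) {x : Euc N} (hxZ : x ∈ Z)
    (hxO : x ∈ closure O) (hloc : ∀ᶠ z in 𝓝[X] x, z ∈ closure O → z ∈ O ∪ Z) :
    closure O ∈ 𝓝[Z] x := by
  obtain ⟨-, -, ⟨cX⟩⟩ := hX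
  obtain ⟨-, -, ⟨cZ⟩⟩ := hZ
  exact closure_mem_nhdsWithin_of_charted cX cZ hZX hOX hO hdisj hxZ hxO hloc

end IsSimanifold

end Dimension

section Signs

open Topology

variable {N n : ℕ} {T F : Set (Euc N)} {P : Dehyperplane N n T} {x : Euc N}
  {ε : SignType}

namespace Dehyperplane

open Classical in
/-- The sign of a point of `T` with respect to a dehyperplane: `x` lies in `P.part (P.sign x)`.
Points outside `T` get the junk value `0`. -/
def sign (P : Dehyperplane N n T) (x : Euc N) : SignType :=
  if x ∈ P.plus then 1 else if x ∈ P.minus then -1 else 0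

/-- The part of `F` on which `P` has sign `ε`, that is, `F ∩ P^ε`. -/
def side (P : Dehyperplane N n T) (ε : SignType) (F : Set (Euc N)) : Set (Euc N) :=
  {x ∈ F | P.sign x = ε}

/-- `P` meets `X` without containing it. The dehyperplanes of `A` crossing a flat `X` are those
whose traces form the restriction of `A` to `X`. -/
def Crosses (P : Dehyperplane N n T) (X : Set (Euc N)) : Prop :=
  (P.P ∩ X).Nonempty ∧ ¬X ⊆ P.P

lemma sign_eq_one_iff : P.sign x = 1 ↔ x ∈ P.plus := by
  unfold sign
  split_ifs <;> simp_all

lemma sign_eq_neg_one_iff : P.sign x = -1 ↔ x ∈ P.minus := by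
  have hpm : x ∈ P.plus → x ∉ P.minus := fun h => disjoint_left.1 P.disj_pm h
  unfold sign
  split_ifs <;> simp_all

lemma sign_eq_zero_iff (hx : x ∈ T) : P.sign x = 0 ↔ x ∈ P.P := by
  have hpP : x ∈ P.plus → x ∉ P.P := fun h => disjoint_left.1 P.disj_pP h
  have hPm : x ∈ P.P → x ∉ P.minus := fun h => disjoint_left.1 P.disj_Pm h
  have hx' : (x ∈ P.plus ∨ x ∈ P.P) ∨ x ∈ P.minus := P.union_eq.superset hx
  unfold sign
  split_ifs
  · simp_all
  · simp_all
  · simp_all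

lemma mem_part_iff (hx : x ∈ T) : x ∈ P.part ε ↔ P.sign x = ε := by
  cases ε
  · exact (sign_eq_zero_iff hx).symm
  · exact sign_eq_neg_one_iff.symm
  · exact sign_eq_one_iff.symm

lemma relOpen_plus (P : Dehyperplane N n T) : RelOpen P.plus T := by
  intro x hx
  have hxm : x ∉ closure P.minus := fun h =>
    disjoint_left.1 P.disj_pP hx (P.closure_eq ▸ ⟨subset_closure hx, h⟩)
  filter_upwards [RelOpen.sdiff_of_isClosed T isClosed_closure x
    ⟨P.union_eq ▸ Or.inl (Or.inl hx), hxm⟩] with y ⟨hyT, hym⟩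
  rw [← P.union_eq] at hyT
  rcases hyT with (h | h) | h
  · exact h
  · exact absurd (P.closure_eq.superset h).2 hym
  · exact absurd (subset_closure h) hym

lemma relOpen_minus (P : Dehyperplane N n T) : RelOpen P.minus T := by
  intro x hx
  have hxp : x ∉ closure P.plus := fun h =>
    disjoint_left.1 P.disj_Pm (P.closure_eq ▸ ⟨h, subset_closure hx⟩) hx
  filter_upwards [RelOpen.sdiff_of_isClosed T isClosed_closure x
    ⟨P.union_eq ▸ Or.inr hx, hxp⟩] with y ⟨hyT, hyp⟩
  rw [← P.union_eq] at hyT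
  rcases hyT with (h | h) | h
  · exact absurd (subset_closure h) hyp
  · exact absurd (P.closure_eq.superset h).1 hyp
  · exact h

lemma eventually_sign_eq (h : P.sign x ≠ 0) : ∀ᶠ y in 𝓝[T] x, P.sign y = P.sign x := by
  have hcases : ∀ ε : SignType, ε ≠ 0 → ε = 1 ∨ ε = -1 := by decide
  rcases hcases _ h with hx | hx
  · filter_upwards [P.relOpen_plus x (sign_eq_one_iff.1 hx)] with y hy
    rw [hx, sign_eq_one_iff.2 hy]
  · filter_upwards [P.relOpen_minus x (sign_eq_neg_one_iff.1 hx)] with y hy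
    rw [hx, sign_eq_neg_one_iff.2 hy]

lemma sign_eq_of_isPreconnected (hF : IsPreconnected F) (hFT : F ⊆ T)
    (h0 : ∀ z ∈ F, P.sign z ≠ 0) {y : Euc N} (hx : x ∈ F) (hy : y ∈ F) : P.sign x = P.sign y :=
  hF.constant (fun z hz => continuousWithinAt_const.congr_of_eventuallyEq
    (nhdsWithin_mono z hFT (eventually_sign_eq (h0 z hz))) rfl) hx hy

lemma side_subset (P : Dehyperplane N n T) (ε : SignType) (F : Set (Euc N)) : P.side ε F ⊆ F :=
  fun _ hx => hx.1

lemma inter_side (P : Dehyperplane N n T) (ε : SignType) (X F : Set (Euc N)) :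
    X ∩ P.side ε F = P.side ε (X ∩ F) := by
  ext x
  exact and_assoc.symm

lemma side_zero (P : Dehyperplane N n T) (hF : F ⊆ T) : P.side 0 F = P.P ∩ F := by
  ext x
  exact ⟨fun h => ⟨(sign_eq_zero_iff (hF h.1)).1 h.2, h.1⟩,
    fun h => ⟨h.2, (sign_eq_zero_iff (hF h.2)).2 h.1⟩⟩

lemma side_eq_part_inter (P : Dehyperplane N n T) (ε : SignType) (hF : F ⊆ T) :
    P.side ε F = P.part ε ∩ F := by
  ext x
  exact ⟨fun h => ⟨(mem_part_iff (hF h.1)).2 h.2, h.1⟩,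
    fun h => ⟨h.2, (mem_part_iff (hF h.2)).1 h.1⟩⟩

lemma relOpen_side (hF : F ⊆ T) (hε : ε ≠ 0) : RelOpen (P.side ε F) F := by
  rintro x ⟨hx, rfl⟩
  filter_upwards [nhdsWithin_mono x hF (eventually_sign_eq hε), self_mem_nhdsWithin]
    with y hy hyF using ⟨hyF, hy⟩

lemma mem_side_or_of_mem_closure (hF : F ⊆ T) (hx : x ∈ F) (hxc : x ∈ closure (P.side ε F)) :
    x ∈ P.side ε F ∨ x ∈ P.P ∩ F := by
  by_cases h0 : P.sign x = 0
  · exact Or.inr ⟨(sign_eq_zero_iff (hF hx)).1 h0, hx⟩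
  · have hfreq := frequently_mem_nhdsWithin hxc ((P.side_subset ε F).trans hF)
    obtain ⟨y, hy, hyx⟩ := (hfreq.and_eventually (eventually_sign_eq h0)).exists
    exact Or.inl ⟨hx, hyx.symm.trans hy.2⟩

end Dehyperplane

end Signs

section Flats

open Filter

variable {N n : ℕ} {T X : Set (Euc N)} {A : Set (Dehyperplane N n T)} {P Q : Dehyperplane N n T}
  {ε : SignType}

lemma subset_of_mem_flats (hX : X ∈ flats A) : X ⊆ T := by
  obtain ⟨-, B, -, rfl⟩ := hX
  exact inter_subset_left

lemma inter_mem_flats (hX : X ∈ flats A) (hP : P ∈ A) (hne : (P.P ∩ X).Nonempty) :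
    P.P ∩ X ∈ flats A := by
  obtain ⟨-, B, hB, rfl⟩ := hX
  exact ⟨hne, insert P B, insert_subset hP hB, by rw [biInter_insert, inter_left_comm]⟩

lemma finite_flats (hA : A.Finite) : (flats A).Finite := by
  refine (hA.finite_subsets.image fun B => T ∩ ⋂ P ∈ B, P.P).subset ?_
  rintro X ⟨-, B, hB, rfl⟩
  exact ⟨B, hB, rfl⟩

namespace IsDA

lemma isSimanifold (hA : IsDA n T A) (hT : IsSimanifold n T) (hX : X ∈ flats A) :
    IsSimanifold (sdim X) X := by
  suffices h : ∃ i, IsSimanifold i X by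
    obtain ⟨i, hi⟩ := h
    rwa [hi.sdim_eq]
  obtain ⟨hne, B, hB, rfl⟩ := hX
  induction B, hA.1.subset hB using Set.Finite.induction_on with
  | empty => exact ⟨n, by simpa using hT⟩
  | @insert Q B _ _ ih =>
    have hBA : B ⊆ A := (subset_insert _ _).trans hB
    rw [biInter_insert, inter_left_comm] at hne ⊢
    have hneB : (T ∩ ⋂ P ∈ B, P.P).Nonempty := hne.mono inter_subset_right
    rcases hA.2 Q (hB (mem_insert _ _)) _ ⟨hneB, B, hBA, rfl⟩ hne with h | ⟨i, -, -, hi, -⟩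
    · rw [inter_eq_right.2 h]
      exact ih hBA hneB
    · exact ⟨_, hi⟩

lemma exists_isSimanifold_of_crosses (hA : IsDA n T A) (hX : X ∈ flats A) (hP : P ∈ A)
    (hPX : P.Crosses X) :
    ∃ i, 1 ≤ i ∧ IsSimanifold (i - 1) (P.P ∩ X) ∧
      ∀ ε : SignType, ε ≠ 0 → IsSimanifold i (P.side ε X) := by
  have hXT := subset_of_mem_flats hX
  obtain ⟨i, hi, -, hwall, hplus, hminus⟩ := (hA.2 P hP X hX hPX.1).resolve_left hPX.2
  refine ⟨i, hi, hwall, fun ε hε => ?_⟩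
  rw [P.side_eq_part_inter ε hXT]
  cases ε
  · exact absurd rfl hε
  · exact hminus
  · exact hplus

lemma isSimanifold_side (hA : IsDA n T A) (hT : IsSimanifold n T) (hX : X ∈ flats A) (hP : P ∈ A)
    (hPX : P.Crosses X) (hε : ε ≠ 0) : IsSimanifold (sdim X) (P.side ε X) := by
  obtain ⟨i, -, -, hside⟩ := hA.exists_isSimanifold_of_crosses hX hP hPX
  have h := hside ε hε
  rwa [← h.sdim_eq, (hA.isSimanifold hT hX).sdim_eq_of_relOpen h.1 (P.side_subset ε X)
    (Dehyperplane.relOpen_side (subset_of_mem_flats hX) hε)] at h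

lemma sdim_wall_add_one (hA : IsDA n T A) (hT : IsSimanifold n T) (hX : X ∈ flats A) (hP : P ∈ A)
    (hPX : P.Crosses X) : sdim (P.P ∩ X) + 1 = sdim X := by
  obtain ⟨i, hi, hwall, hside⟩ := hA.exists_isSimanifold_of_crosses hX hP hPX
  have h := hside 1 (by decide)
  rw [hwall.sdim_eq, ← h.sdim_eq.symm.trans
    (hA.isSimanifold_side hT hX hP hPX (by decide)).sdim_eq, Nat.sub_add_cancel hi]

/-- Otherwise the side would be clopen in `X`. -/
lemma wall_inter_closure_side_nonempty (hA : IsDA n T A) (hT : IsSimanifold n T)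
    (hX : X ∈ flats A) (hP : P ∈ A) (hPX : P.Crosses X) (hε : ε ≠ 0) :
    (P.P ∩ X ∩ closure (P.side ε X)).Nonempty := by
  have hXT := subset_of_mem_flats hX
  by_contra hempty
  have hcompl : RelOpen (X \ P.side ε X) X := by
    have hcl : X \ P.side ε X = X \ closure (P.side ε X) := by
      refine subset_antisymm (fun x hx => ⟨hx.1, fun hxc => ?_⟩)
        (sdiff_subset_sdiff_right subset_closure)
      exact (Dehyperplane.mem_side_or_of_mem_closure hXT hx.1 hxc).elim hx.2
        fun hw => hempty ⟨x, hw, hxc⟩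
    exact hcl ▸ RelOpen.sdiff_of_isClosed X isClosed_closure
  rcases RelOpen.eq_empty_or_eq_of_isPreconnected (hA.isSimanifold hT hX).isPreconnected
    (P.side_subset ε X) (Dehyperplane.relOpen_side hXT hε) hcompl with h | h
  · exact (hA.isSimanifold_side hT hX hP hPX hε).1.ne_empty h
  · obtain ⟨x, hxP, hxX⟩ := hPX.1
    have hx : P.sign x = ε := (h.superset hxX).2
    exact hε (hx ▸ (Dehyperplane.sign_eq_zero_iff (hXT hxX)).2 hxP)

lemma wall_subset_closure_side (hA : IsDA n T A) (hT : IsSimanifold n T) (hX : X ∈ flats A)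
    (hP : P ∈ A) (hPX : P.Crosses X) (hε : ε ≠ 0) : P.P ∩ X ⊆ closure (P.side ε X) := by
  have hXT := subset_of_mem_flats hX
  have hwall := hA.isSimanifold hT (inter_mem_flats hX hP hPX.1)
  have hdisj : Disjoint (P.side ε X) (P.P ∩ X) := disjoint_left.2 fun x hx hxP =>
    hε (hx.2 ▸ (Dehyperplane.sign_eq_zero_iff (hXT hx.1)).2 hxP.1)
  have hopen : RelOpen (P.P ∩ X ∩ closure (P.side ε X)) (P.P ∩ X) := fun x hx =>
    inter_mem self_mem_nhdsWithin <|
      (hA.isSimanifold hT hX).closure_mem_nhdsWithin hwall inter_subset_right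
        (P.side_subset ε X) (Dehyperplane.relOpen_side hXT hε) hdisj hx.1 hx.2 <| by
        filter_upwards [self_mem_nhdsWithin] with z hz using
          Dehyperplane.mem_side_or_of_mem_closure hXT hz
  have hcompl : RelOpen ((P.P ∩ X) \ (P.P ∩ X ∩ closure (P.side ε X))) (P.P ∩ X) := by
    rw [sdiff_self_inter]
    exact RelOpen.sdiff_of_isClosed _ isClosed_closure
  rcases RelOpen.eq_empty_or_eq_of_isPreconnected hwall.isPreconnected inter_subset_left
    hopen hcompl with h | h
  · exact absurd h (hA.wall_inter_closure_side_nonempty hT hX hP hPX hε).ne_empty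
  · exact inter_eq_left.1 h

lemma wall_eq_of_subset (hA : IsDA n T A) (hT : IsSimanifold n T) (hX : X ∈ flats A)
    (hP : P ∈ A) (hQ : Q ∈ A) (hnP : ¬X ⊆ P.P) (hQX : Q.Crosses X) (hsub : Q.P ∩ X ⊆ P.P) :
    Q.P ∩ X = P.P ∩ X := by
  have hPX : P.Crosses X := ⟨hQX.1.mono (subset_inter hsub inter_subset_right), hnP⟩
  have heq : Q.P ∩ (P.P ∩ X) = Q.P ∩ X := by
    rw [inter_left_comm, inter_eq_right.2 hsub]
  refine subset_antisymm (subset_inter hsub inter_subset_right) ?_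
  by_contra hne
  have hQPX : Q.Crosses (P.P ∩ X) :=
    ⟨heq ▸ hQX.1, fun h => hne (subset_inter h inter_subset_right)⟩
  have h := hA.sdim_wall_add_one hT (inter_mem_flats hX hP hPX.1) hQ hQPX
  rw [heq] at h
  have hPdim := hA.sdim_wall_add_one hT hX hP hPX
  have hQdim := hA.sdim_wall_add_one hT hX hQ hQX
  omega

lemma sign_eq_of_mem_side (hA : IsDA n T A) (hT : IsSimanifold n T) (hX : X ∈ flats A)
    (hP : P ∈ A) (hQ : Q ∈ A) (hQX : Q.Crosses X) (hsub : Q.P ∩ X ⊆ P.P) (hε : ε ≠ 0)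
    {x y : Euc N} (hx : x ∈ Q.side ε X) (hy : y ∈ Q.side ε X) : P.sign x = P.sign y := by
  have hXT := subset_of_mem_flats hX
  by_cases hnP : X ⊆ P.P
  · rw [(Dehyperplane.sign_eq_zero_iff (hXT hx.1)).2 (hnP hx.1),
      (Dehyperplane.sign_eq_zero_iff (hXT hy.1)).2 (hnP hy.1)]
  · refine Dehyperplane.sign_eq_of_isPreconnected
      (hA.isSimanifold_side hT hX hQ hQX hε).isPreconnected ((Q.side_subset ε X).trans hXT)
      (fun z hz h0 => hε ?_) hx hy
    have hzQ : z ∈ Q.P ∩ X := (hA.wall_eq_of_subset hT hX hP hQ hnP hQX hsub).superset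
      ⟨(Dehyperplane.sign_eq_zero_iff (hXT hz.1)).1 h0, hz.1⟩
    exact hz.2 ▸ (Dehyperplane.sign_eq_zero_iff (hXT hz.1)).2 hzQ.1

end IsDA

end Flats

section GenericLocus

open Topology Filter Dehyperplane

variable {N n : ℕ} {T X : Set (Euc N)} {A B : Set (Dehyperplane N n T)}

lemma eventually_forall_sign_eq (hB : B.Finite) (x : Euc N) :
    ∀ᶠ y in 𝓝[T] x, ∀ P ∈ B, P.sign x ≠ 0 → P.sign y = P.sign x := by
  rw [hB.eventually_all]
  intro P _
  by_cases h : P.sign x = 0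
  · exact Eventually.of_forall fun y hy => absurd h hy
  · filter_upwards [eventually_sign_eq h] with y hy _ using hy

/-- The points of `X` lying on no dehyperplane of `A` other than those containing `X`. For a flat
`X` they form the union of the chambers of the restriction of `A` to `X`. -/
def genericLocus (A : Set (Dehyperplane N n T)) (X : Set (Euc N)) : Set (Euc N) :=
  {x ∈ X | ∀ P ∈ A, P.sign x = 0 → X ⊆ P.P}

lemma genericLocus_subset : genericLocus A X ⊆ X := fun _ hx => hx.1

lemma relOpen_genericLocus (hA : A.Finite) (hX : X ⊆ T) : RelOpen (genericLocus A X) X := by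
  intro x hx
  filter_upwards [self_mem_nhdsWithin, nhdsWithin_mono x hX (eventually_forall_sign_eq hA x)]
    with y hyX hy
  refine ⟨hyX, fun P hP h0 => hx.2 P hP ?_⟩
  by_contra hne
  exact hne ((hy P hP hne).symm.trans h0)

lemma IsDA.subset_closure_genericLocus (hA : IsDA n T A) (hT : IsSimanifold n T)
    (hX : X ∈ flats A) (hB : B ⊆ A) : X ⊆ closure (genericLocus B X) := by
  have hXT := subset_of_mem_flats hX
  induction B, hA.1.subset hB using Set.Finite.induction_on with
  | empty => exact fun x hx => subset_closure ⟨hx, by simp⟩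
  | @insert Q B _ hBfin ih =>
    have hBA : B ⊆ A := (subset_insert _ _).trans hB
    have hinsert : genericLocus B X ∩ genericLocus {Q} X ⊆ genericLocus (insert Q B) X := by
      rintro x ⟨hxB, hxQ⟩
      exact ⟨hxB.1, forall_mem_insert.2 ⟨hxQ.2 Q rfl, hxB.2⟩⟩
    have hsingle : X ⊆ closure (genericLocus {Q} X) := by
      intro x hx
      by_cases hx0 : Q.sign x = 0 → X ⊆ Q.P
      · exact subset_closure (show x ∈ genericLocus {Q} X from ⟨hx, by simpa using hx0⟩)
      · push Not at hx0
        have hxQ : x ∈ Q.P ∩ X := ⟨(sign_eq_zero_iff (hXT hx)).1 hx0.1, hx⟩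
        have hside : Q.side 1 X ⊆ genericLocus {Q} X := by
          rintro y ⟨hyX, hy⟩
          refine ⟨hyX, ?_⟩
          rintro P rfl h0
          exact absurd (hy.symm.trans h0) one_ne_zero
        exact closure_mono hside (hA.wall_subset_closure_side hT hX (hB (mem_insert _ _))
          ⟨⟨x, hxQ⟩, hx0.2⟩ one_ne_zero hxQ)
    have hopen := relOpen_genericLocus hBfin hXT
    exact (ih hBA).trans <| (hopen.closure_subset_closure_inter genericLocus_subset
      genericLocus_subset hsingle).trans (closure_mono hinsert)

end GenericLocus

section SignConnected

open Topology Dehyperplane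

variable {N n : ℕ} {T X F G S : Set (Euc N)} {A : Set (Dehyperplane N n T)}
  {Q : Dehyperplane N n T} {ε : SignType} {x y : Euc N}

/-- `S` is clopen in the relatively open subset `F` of `X`, and for generic points of `F`,
membership in `S` depends only on the signs. -/
structure SignClopen (A : Set (Dehyperplane N n T)) (X F S : Set (Euc N)) : Prop where
  subset : S ⊆ F
  relOpen : RelOpen S X
  relOpen_compl : RelOpen (F \ S) X
  mem_of_sign_eq : ∀ x ∈ S ∩ genericLocus A X, ∀ y ∈ F ∩ genericLocus A X,
    (∀ P ∈ A, P.sign x = P.sign y) → y ∈ S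

/-- A substitute for connectedness that can be inherited by a side from the set that is cut and
from its wall: `F` has no nontrivial clopen subset that is determined by signs. -/
def SignConnected (A : Set (Dehyperplane N n T)) (X F : Set (Euc N)) : Prop :=
  ∀ S, SignClopen A X F S → S = ∅ ∨ S = F

lemma SignClopen.compl (hS : SignClopen A X F S) : SignClopen A X F (F \ S) where
  subset := sdiff_subset
  relOpen := hS.relOpen_compl
  relOpen_compl := by rw [sdiff_sdiff_cancel_left hS.subset]; exact hS.relOpen
  mem_of_sign_eq x hx y hy hxy := ⟨hy.1, fun hyS =>
    hx.1.2 (hS.mem_of_sign_eq y ⟨hyS, hy.2⟩ x ⟨hx.1.1, hx.2⟩ fun P hP => (hxy P hP).symm)⟩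

lemma SignClopen.mem_of_mem_closure (hS : SignClopen A X F S) (hFX : F ⊆ X) (hx : x ∈ F)
    (hxS : x ∈ closure S) : x ∈ S := by
  by_contra hxn
  obtain ⟨y, hyS, hy⟩ := ((frequently_mem_nhdsWithin hxS (hS.subset.trans hFX)).and_eventually
    (hS.relOpen_compl x ⟨hx, hxn⟩)).exists
  exact hy.2 hyS

lemma SignClopen.mem_or_of_mem_closure (hS : SignClopen A X (Q.side ε G) S) (hXT : X ⊆ T)
    (hGX : G ⊆ X) (hx : x ∈ G) (hxS : x ∈ closure S) : x ∈ S ∨ x ∈ Q.P ∩ G :=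
  (mem_side_or_of_mem_closure (hGX.trans hXT) hx (closure_mono hS.subset hxS)).imp_left
    fun h => hS.mem_of_mem_closure ((Q.side_subset ε G).trans hGX) h hxS

lemma SignClopen.of_disjoint_closure (hS : SignClopen A X (Q.side ε G) S) (hXT : X ⊆ T)
    (hGX : G ⊆ X) (hG : RelOpen G X) (hQ : Q ∈ A) (hdisj : Disjoint (Q.P ∩ G) (closure S)) :
    SignClopen A X G S where
  subset := hS.subset.trans (Q.side_subset ε G)
  relOpen := hS.relOpen
  relOpen_compl := by
    have heq : G \ S = G ∩ (X \ closure S) := by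
      ext x
      refine ⟨fun hx => ⟨hx.1, hGX hx.1, fun hxS => ?_⟩,
        fun hx => ⟨hx.1, fun hxS => hx.2.2 (subset_closure hxS)⟩⟩
      exact (hS.mem_or_of_mem_closure hXT hGX hx.1 hxS).elim hx.2
        fun hxQ => disjoint_left.1 hdisj hxQ hxS
    exact heq ▸ hG.inter (RelOpen.sdiff_of_isClosed X isClosed_closure)
  mem_of_sign_eq x hx y hy hxy := hS.mem_of_sign_eq x hx y
    ⟨⟨hy.1, (hxy Q hQ).symm.trans (hS.subset hx.1).2⟩, hy.2⟩ hxy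

lemma SignClopen.relOpen_wall_inter_closure (hS : SignClopen A X (Q.side ε G) S)
    (hA : IsDA n T A) (hT : IsSimanifold n T) (hX : X ∈ flats A) (hGX : G ⊆ X) (hG : RelOpen G X)
    (hQ : Q ∈ A) (hε : ε ≠ 0) : RelOpen (Q.P ∩ G ∩ closure S) (Q.P ∩ X) := by
  rintro x ⟨⟨hxQ, hxG⟩, hxS⟩
  have hXT := subset_of_mem_flats hX
  have hwall := hA.isSimanifold hT (inter_mem_flats hX hQ ⟨x, hxQ, hGX hxG⟩)
  have hdisj : Disjoint S (Q.P ∩ X) := disjoint_left.2 fun z hzS hz =>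
    hε ((hS.subset hzS).2.symm.trans ((sign_eq_zero_iff (hXT hz.2)).2 hz.1))
  have hclosure : closure S ∈ 𝓝[Q.P ∩ X] x :=
    (hA.isSimanifold hT hX).closure_mem_nhdsWithin hwall inter_subset_right
      (hS.subset.trans ((Q.side_subset ε G).trans hGX)) hS.relOpen hdisj ⟨hxQ, hGX hxG⟩ hxS <| by
      filter_upwards [hG x hxG] with z hz hzS using
        (hS.mem_or_of_mem_closure hXT hGX hz hzS).imp_right fun h => ⟨h.1, hGX h.2⟩
  filter_upwards [self_mem_nhdsWithin, nhdsWithin_mono x inter_subset_right (hG x hxG), hclosure]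
    with z hz hzG hzS using ⟨⟨hz.1, hzG⟩, hzS⟩

lemma IsDA.closure_subset_closure_inter_genericLocus (hA : IsDA n T A) (hT : IsSimanifold n T)
    (hX : X ∈ flats A) (hSX : S ⊆ X) (hS : RelOpen S X) :
    closure S ⊆ closure (S ∩ genericLocus A X) :=
  hS.closure_subset_closure_inter hSX genericLocus_subset
    (hA.subset_closure_genericLocus hT hX Subset.rfl)

/-- Near a generic point of the wall, the signs on the side `ε` are those on the wall, except for
the dehyperplanes containing the wall, whose sign is constant on the side. -/
lemma SignClopen.mem_closure_inter (hS : SignClopen A X (Q.side ε G) S) (hA : IsDA n T A)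
    (hT : IsSimanifold n T) (hX : X ∈ flats A) (hGX : G ⊆ X) (hQ : Q ∈ A) (hQX : Q.Crosses X)
    (hε : ε ≠ 0) {S' : Set (Euc N)} (hS'G : S' ⊆ Q.side ε G) (hS' : RelOpen S' X)
    (hx : x ∈ genericLocus A (Q.P ∩ X)) (hxy : ∀ P ∈ A, P.sign x = P.sign y)
    (hxS : x ∈ closure S) (hyS : y ∈ closure S') : y ∈ closure (S' ∩ S) := by
  have hXT := subset_of_mem_flats hX
  have hsub : Q.side ε G ⊆ X := (Q.side_subset ε G).trans hGX
  have hside : Q.side ε G ⊆ Q.side ε X := fun z hz => ⟨hGX hz.1, hz.2⟩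
  have hfreq : ∀ {z R}, R ⊆ Q.side ε G → RelOpen R X → z ∈ closure R →
      ∃ᶠ w in 𝓝[T] z, w ∈ R ∩ genericLocus A X := fun hRG hR hz =>
    frequently_mem_nhdsWithin (hA.closure_subset_closure_inter_genericLocus hT hX
      (hRG.trans hsub) hR hz) (inter_subset_right.trans (genericLocus_subset.trans hXT))
  obtain ⟨s, hs, hsx⟩ := ((hfreq hS.subset hS.relOpen hxS).and_eventually
    (eventually_forall_sign_eq hA.1 x)).exists
  have hfreq' := (hfreq hS'G hS' hyS).and_eventually (eventually_forall_sign_eq hA.1 y)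
  refine mem_closure_iff_frequently.2 ((hfreq'.filter_mono nhdsWithin_le_nhds).mono ?_)
  rintro w ⟨hw, hwy⟩
  refine ⟨hw.1, hS.mem_of_sign_eq s hs w ⟨hS'G hw.1, hw.2⟩ fun P hP => ?_⟩
  by_cases h0 : P.sign x = 0
  · exact hA.sign_eq_of_mem_side hT hX hP hQ hQX (hx.2 P hP h0) hε
      (hside (hS.subset hs.1)) (hside (hS'G hw.1))
  · rw [hsx P hP h0, hwy P hP (hxy P hP ▸ h0), hxy P hP]

lemma SignClopen.wall_inter_closure (hS : SignClopen A X (Q.side ε G) S) (hA : IsDA n T A)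
    (hT : IsSimanifold n T) (hX : X ∈ flats A) (hGX : G ⊆ X) (hG : RelOpen G X) (hQ : Q ∈ A)
    (hQX : Q.Crosses X) (hε : ε ≠ 0) :
    SignClopen A (Q.P ∩ X) (Q.P ∩ G) (Q.P ∩ G ∩ closure S) where
  subset := inter_subset_left
  relOpen := hS.relOpen_wall_inter_closure hA hT hX hGX hG hQ hε
  relOpen_compl := by
    rw [sdiff_self_inter]
    have heq : (Q.P ∩ G) \ closure S = G ∩ ((Q.P ∩ X) \ closure S) := by
      ext x
      exact ⟨fun h => ⟨h.1.2, ⟨h.1.1, hGX h.1.2⟩, h.2⟩, fun h => ⟨⟨h.2.1.1, h.1⟩, h.2.2⟩⟩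
    exact heq ▸ (hG.mono_right inter_subset_right).inter
      (RelOpen.sdiff_of_isClosed _ isClosed_closure)
  mem_of_sign_eq := by
    rintro x ⟨⟨-, hxS⟩, hx⟩ y ⟨hyG, hy⟩ hxy
    have hside : G ∩ Q.side ε X = Q.side ε G := by
      rw [inter_side, inter_eq_left.2 hGX]
    have hopen : RelOpen (Q.side ε X) X := relOpen_side (subset_of_mem_flats hX) hε
    have hyS' := hG.mem_closure_inter (Q.side_subset ε X) hyG.2
      (hA.wall_subset_closure_side hT hX hQ hQX hε ⟨hyG.1, hGX hyG.2⟩)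
    rw [hside] at hyS'
    exact ⟨hyG, closure_mono inter_subset_right (hS.mem_closure_inter hA hT hX hGX hQ hQX hε
      Subset.rfl (hside ▸ hG.inter hopen) hx hxy hxS hyS')⟩

lemma SignClopen.wall_inter_closure_compl_eq_empty (hS : SignClopen A X (Q.side ε G) S)
    (hA : IsDA n T A) (hT : IsSimanifold n T) (hX : X ∈ flats A) (hGX : G ⊆ X) (hG : RelOpen G X)
    (hQ : Q ∈ A) (hQX : Q.Crosses X) (hε : ε ≠ 0) (hwall : Q.P ∩ G ⊆ closure S) :
    Q.P ∩ G ∩ closure (Q.side ε G \ S) = ∅ := by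
  have hopen := hS.compl.relOpen_wall_inter_closure hA hT hX hGX hG hQ hε
  by_contra hne
  obtain ⟨z, hz⟩ := nonempty_iff_ne_empty.2 hne
  obtain ⟨x, ⟨hxG, hxc⟩, hx⟩ := closure_nonempty_iff.1 ⟨z,
    hA.closure_subset_closure_inter_genericLocus hT (inter_mem_flats hX hQ hQX.1)
      (inter_subset_left.trans (inter_subset_inter_right _ hGX)) hopen (subset_closure hz)⟩
  have hxS := hS.mem_closure_inter hA hT hX hGX hQ hQX hε sdiff_subset hS.relOpen_compl hx
    (fun _ _ => rfl) (hwall hxG) hxc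
  rw [sdiff_inter_self, closure_empty] at hxS
  exact hxS

/-- A sign-determined clopen subset `S` of a side has as trace none or all of the wall. In the
first case `S` is clopen in the whole of `G`; in the second this holds for its complement. -/
lemma SignConnected.side (hGc : SignConnected A X G) (hA : IsDA n T A) (hT : IsSimanifold n T)
    (hX : X ∈ flats A) (hGX : G ⊆ X) (hG : RelOpen G X) (hQ : Q ∈ A) (hε : ε ≠ 0)
    (hwall : (Q.P ∩ X).Nonempty → SignConnected A (Q.P ∩ X) (Q.P ∩ G)) :
    SignConnected A X (Q.side ε G) := by
  have hXT := subset_of_mem_flats hX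
  have of_disjoint : ∀ S, SignClopen A X (Q.side ε G) S → Q.P ∩ G ∩ closure S = ∅ →
      S = ∅ ∨ S = Q.side ε G := by
    intro S hS hdisj
    refine (hGc S (hS.of_disjoint_closure hXT hGX hG hQ
      (disjoint_iff_inter_eq_empty.2 hdisj))).imp_right fun h => hS.subset.antisymm ?_
    exact h.symm ▸ Q.side_subset ε G
  intro S hS
  by_cases hne : (Q.P ∩ X).Nonempty
  swap
  · refine of_disjoint S hS (subset_empty_iff.1 fun x hx => hne ⟨x, hx.1.1, hGX hx.1.2⟩)
  by_cases hXQ : X ⊆ Q.P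
  · refine Or.inl (subset_empty_iff.1 fun x hx => hε ?_)
    have hxF := hS.subset hx
    exact hxF.2.symm.trans ((sign_eq_zero_iff (hXT (hGX hxF.1))).2 (hXQ (hGX hxF.1)))
  rcases hwall hne _ (hS.wall_inter_closure hA hT hX hGX hG hQ ⟨hne, hXQ⟩ hε) with h | h
  · exact of_disjoint S hS h
  · have hcompl := hS.wall_inter_closure_compl_eq_empty hA hT hX hGX hG hQ ⟨hne, hXQ⟩ hε
      (inter_eq_left.1 h)
    rcases of_disjoint _ hS.compl hcompl with h' | h'
    · exact Or.inr (hS.subset.antisymm (sdiff_eq_empty.1 h'))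
    · exact Or.inl (by rw [← sdiff_sdiff_cancel_left hS.subset, h', Set.sdiff_self])

end SignConnected

section Cells

open Dehyperplane

variable {N n : ℕ} {T X Y F : Set (Euc N)} {A : Set (Dehyperplane N n T)}
  {P : Dehyperplane N n T} {x y : Euc N}

/-- The cells of `X`: the intersections of `X` with finitely many open sides of dehyperplanes of
`A`, the empty intersection being `X` itself. Cells may be empty. -/
inductive IsCell (A : Set (Dehyperplane N n T)) (X : Set (Euc N)) : Set (Euc N) → Prop
  | refl : IsCell A X X
  | side {F : Set (Euc N)} {P : Dehyperplane N n T} {ε : SignType} (hF : IsCell A X F)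
      (hP : P ∈ A) (hε : ε ≠ 0) : IsCell A X (P.side ε F)

namespace IsCell

lemma subset (hF : IsCell A X F) : F ⊆ X := by
  induction hF with
  | refl => exact Subset.rfl
  | side _ _ _ ih => exact (side_subset _ _ _).trans ih

lemma relOpen (hF : IsCell A X F) (hXT : X ⊆ T) : RelOpen F X := by
  induction hF with
  | refl => exact RelOpen.refl X
  | side hF _ hε ih => exact (relOpen_side (hF.subset.trans hXT) hε).trans ih (side_subset _ _ _)

lemma inter_of_subset (hF : IsCell A X F) (hYX : Y ⊆ X) : IsCell A Y (Y ∩ F) := by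
  induction hF with
  | refl => rw [inter_eq_left.2 hYX]; exact refl
  | side _ hP hε ih => rw [inter_side]; exact ih.side hP hε

lemma signConnected (hF : IsCell A X F) (hA : IsDA n T A) (hT : IsSimanifold n T)
    (hX : X ∈ flats A) : SignConnected A X F := by
  suffices h : ∀ Y ∈ flats A, Y ⊆ X → SignConnected A Y (Y ∩ F) by
    rw [← inter_eq_right.2 hF.subset]
    exact h X hX Subset.rfl
  induction hF with
  | refl =>
    intro Y hY hYX S hS
    rw [inter_eq_left.2 hYX] at hS ⊢
    exact RelOpen.eq_empty_or_eq_of_isPreconnected (hA.isSimanifold hT hY).isPreconnected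
      hS.subset hS.relOpen hS.relOpen_compl
  | @side F P ε hF hP hε ih =>
    intro Y hY hYX
    rw [inter_side]
    refine (ih Y hY hYX).side hA hT hY inter_subset_left
      ((hF.inter_of_subset hYX).relOpen (subset_of_mem_flats hY)) hP hε fun hne => ?_
    rw [← inter_assoc]
    exact ih _ (inter_mem_flats hY hP hne) (inter_subset_right.trans hYX)

lemma sign_eq (hF : IsCell A X F) (hA : IsDA n T A) (hT : IsSimanifold n T) (hX : X ∈ flats A)
    (hP : P ∈ A) (hPF : ∀ z ∈ F, P.sign z ≠ 0) (hx : x ∈ F) (hy : y ∈ F) :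
    P.sign x = P.sign y := by
  have hFT := hF.subset.trans (subset_of_mem_flats hX)
  have hopen := hF.relOpen (subset_of_mem_flats hX)
  have hS : SignClopen A X F (P.side (P.sign y) F) :=
    { subset := P.side_subset _ F
      relOpen := (relOpen_side hFT (hPF y hy)).trans hopen (P.side_subset _ F)
      relOpen_compl := by
        rintro z ⟨hz, hzy⟩
        filter_upwards [hopen z hz, nhdsWithin_mono z (subset_of_mem_flats hX)
          (eventually_sign_eq (hPF z hz))] with w hw hwz
        exact ⟨hw, fun h => hzy ⟨hz, hwz.symm.trans h.2⟩⟩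
      mem_of_sign_eq := fun z hz w hw h => ⟨hw.1, (h P hP).symm.trans hz.1.2⟩ }
  rcases hF.signConnected hA hT hX _ hS with h | h
  · exact absurd (show y ∈ P.side (P.sign y) F from ⟨hy, rfl⟩) (h ▸ notMem_empty y)
  · exact (h.superset hx).2

lemma sdim_eq (hF : IsCell A X F) (hA : IsDA n T A) (hT : IsSimanifold n T) (hX : X ∈ flats A)
    (hne : F.Nonempty) : sdim F = sdim X :=
  (hA.isSimanifold hT hX).sdim_eq_of_relOpen hne hF.subset (hF.relOpen (subset_of_mem_flats hX))

lemma side_nonempty (hF : IsCell A X F) (hA : IsDA n T A) (hT : IsSimanifold n T)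
    (hX : X ∈ flats A) (hP : P ∈ A) (hnX : ¬X ⊆ P.P) (hne : (P.P ∩ F).Nonempty) (ε : SignType) :
    (P.side ε F).Nonempty := by
  obtain ⟨x, hxP, hxF⟩ := hne
  have hxX := hF.subset hxF
  by_cases hε : ε = 0
  · exact ⟨x, hxF, hε ▸ (sign_eq_zero_iff (subset_of_mem_flats hX hxX)).2 hxP⟩
  · have hclosure := hA.wall_subset_closure_side hT hX hP ⟨⟨x, hxP, hxX⟩, hnX⟩ hε ⟨hxP, hxX⟩
    have hmem := (hF.relOpen (subset_of_mem_flats hX)).mem_closure_inter (P.side_subset ε X)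
      hxF hclosure
    rw [inter_side, inter_eq_left.2 hF.subset] at hmem
    exact closure_nonempty_iff.1 ⟨x, hmem⟩

lemma wall (hF : IsCell A X F) : IsCell A (P.P ∩ X) (P.P ∩ F) := by
  have h := hF.inter_of_subset (inter_subset_right (s := P.P))
  rwa [inter_assoc, inter_eq_right.2 hF.subset] at h

end IsCell

end Cells

section EulerRelation

open Dehyperplane

variable {N n : ℕ} {T X F : Set (Euc N)} {A B : Set (Dehyperplane N n T)}
  {P : Dehyperplane N n T} {ε : SignType} {x : Euc N}

open Classical in
/-- The Euler characteristic with compact supports of an open cell `F`, that is `(-1) ^ dim F`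
when `F` is nonempty. -/
def cellEulerChar (F : Set (Euc N)) : ℤ :=
  if F.Nonempty then (-1) ^ sdim F else 0

lemma cellEulerChar_of_nonempty (hF : F.Nonempty) : cellEulerChar F = (-1) ^ sdim F :=
  if_pos hF

lemma cellEulerChar_empty : cellEulerChar (∅ : Set (Euc N)) = 0 :=
  if_neg Set.not_nonempty_empty

lemma sum_cellEulerChar_side_of_sign_eq (hF : ∀ x ∈ F, P.sign x = ε) :
    ∑ ε, cellEulerChar (P.side ε F) = cellEulerChar F := by
  have hself : P.side ε F = F := sep_eq_self_iff_mem_true.2 hF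
  rw [Finset.sum_eq_single ε, hself]
  · intro ε' _ hne
    have hempty : P.side ε' F = ∅ := sep_eq_empty_iff_mem_false.2 fun x hx h =>
      hne (h.symm.trans (hF x hx))
    rw [hempty, cellEulerChar_empty]
  · exact fun h => absurd (Finset.mem_univ ε) h

lemma IsCell.sum_cellEulerChar_side (hF : IsCell A X F) (hA : IsDA n T A) (hT : IsSimanifold n T)
    (hX : X ∈ flats A) (hP : P ∈ A) : ∑ ε, cellEulerChar (P.side ε F) = cellEulerChar F := by
  have hFT := hF.subset.trans (subset_of_mem_flats hX)
  by_cases hXP : X ⊆ P.P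
  · exact sum_cellEulerChar_side_of_sign_eq fun x hx =>
      (sign_eq_zero_iff (hFT hx)).2 (hXP (hF.subset hx))
  by_cases hne : (P.P ∩ F).Nonempty
  · have hside : ∀ ε ≠ 0, cellEulerChar (P.side ε F) = (-1) ^ sdim X := fun ε hε => by
      have hnonempty := hF.side_nonempty hA hT hX hP hXP hne ε
      rw [cellEulerChar_of_nonempty hnonempty, (hF.side hP hε).sdim_eq hA hT hX hnonempty]
    have hPX : P.Crosses X := ⟨hne.mono (inter_subset_inter_right _ hF.subset), hXP⟩
    have hwall : cellEulerChar (P.side 0 F) = (-1) ^ sdim (P.P ∩ X) := by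
      rw [P.side_zero hFT, cellEulerChar_of_nonempty hne,
        hF.wall.sdim_eq hA hT (inter_mem_flats hX hP hPX.1) hne]
    have hFne : F.Nonempty := hne.mono inter_subset_right
    rw [SignType.univ_eq, Finset.sum_insert (by decide), Finset.sum_insert (by decide),
      Finset.sum_singleton, hside (-1) (by decide), hside 1 (by decide), hwall,
      cellEulerChar_of_nonempty hFne, hF.sdim_eq hA hT hX hFne,
      ← hA.sdim_wall_add_one hT hX hP hPX]
    ring
  · have h0 : ∀ z ∈ F, P.sign z ≠ 0 := fun z hz h =>
      hne ⟨z, (sign_eq_zero_iff (hFT hz)).1 h, hz⟩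
    rcases F.eq_empty_or_nonempty with rfl | ⟨y, hy⟩
    · exact sum_cellEulerChar_side_of_sign_eq (ε := 0) fun x hx => absurd hx (notMem_empty x)
    · exact sum_cellEulerChar_side_of_sign_eq fun x hx => hF.sign_eq hA hT hX hP h0 hx hy

/-- The points of `F` with the same signs as `x` with respect to the dehyperplanes in `B`. -/
def signClass (B : Set (Dehyperplane N n T)) (F : Set (Euc N)) (x : Euc N) : Set (Euc N) :=
  {y ∈ F | ∀ P ∈ B, P.sign y = P.sign x}

/-- The pieces into which `F` is cut by the dehyperplanes in `B`; for `F = T` these are the faces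
of `B`. -/
def facesIn (B : Set (Dehyperplane N n T)) (F : Set (Euc N)) : Set (Set (Euc N)) :=
  signClass B F '' F

lemma mem_signClass_self (hx : x ∈ F) : x ∈ signClass B F x := ⟨hx, fun _ _ => rfl⟩

lemma facesIn_empty_right : facesIn B ∅ = ∅ := image_empty _

lemma facesIn_empty_left (hF : F.Nonempty) :
    facesIn (∅ : Set (Dehyperplane N n T)) F = {F} := by
  have hclass : ∀ x, signClass (∅ : Set (Dehyperplane N n T)) F x = F := fun x =>
    sep_eq_self_iff_mem_true.2 fun y _ P hP => absurd hP (notMem_empty P)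
  rw [facesIn, image_congr fun x _ => hclass x, hF.image_const]

lemma facesIn_insert : facesIn (insert P B) F = ⋃ ε, facesIn B (P.side ε F) := by
  have hclass : ∀ x, signClass (insert P B) F x = signClass B (P.side (P.sign x) F) x := by
    intro x
    ext y
    simp only [signClass, side, mem_sep_iff, forall_mem_insert, and_assoc]
  ext G
  simp only [facesIn, mem_iUnion, mem_image]
  constructor
  · rintro ⟨x, hx, rfl⟩
    exact ⟨P.sign x, x, ⟨hx, rfl⟩, (hclass x).symm⟩
  · rintro ⟨_, x, ⟨hx, rfl⟩, rfl⟩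
    exact ⟨x, hx, hclass x⟩

lemma disjoint_facesIn_side {ε ε' : SignType} (h : ε ≠ ε') :
    Disjoint (facesIn B (P.side ε F)) (facesIn B (P.side ε' F)) := by
  refine disjoint_left.2 ?_
  rintro _ ⟨x, hx, rfl⟩ ⟨y, -, hxy⟩
  have hx' : x ∈ P.side ε' F := (hxy.superset (mem_signClass_self hx)).1
  exact h (hx.2.symm.trans hx'.2)

lemma finite_facesIn (hB : B.Finite) (F : Set (Euc N)) : (facesIn B F).Finite := by
  induction B, hB using Set.Finite.induction_on generalizing F with
  | empty =>
    rcases F.eq_empty_or_nonempty with rfl | hF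
    · rw [facesIn_empty_right]
      exact finite_empty
    · rw [facesIn_empty_left hF]
      exact finite_singleton F
  | insert _ _ ih =>
    rw [facesIn_insert]
    exact finite_iUnion fun ε => ih _

theorem IsCell.finsum_facesIn (hF : IsCell A X F) (hA : IsDA n T A) (hT : IsSimanifold n T)
    (hX : X ∈ flats A) (hB : B ⊆ A) :
    ∑ᶠ G ∈ facesIn B F, (-1 : ℤ) ^ sdim G = cellEulerChar F := by
  induction B, hA.1.subset hB using Set.Finite.induction_on generalizing X F with
  | empty =>
    rcases F.eq_empty_or_nonempty with rfl | hne
    · rw [facesIn_empty_right, finsum_mem_empty, cellEulerChar_empty]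
    · rw [facesIn_empty_left hne, finsum_mem_singleton, cellEulerChar_of_nonempty hne]
  | @insert P B _ hBfin ih =>
    have hP : P ∈ A := hB (mem_insert _ _)
    have hside : ∀ ε, ∑ᶠ G ∈ facesIn B (P.side ε F), (-1 : ℤ) ^ sdim G =
        cellEulerChar (P.side ε F) := by
      have hBA := (subset_insert P B).trans hB
      intro ε
      by_cases hε : ε = 0
      · rw [hε, P.side_zero (hF.subset.trans (subset_of_mem_flats hX))]
        rcases (P.P ∩ F).eq_empty_or_nonempty with hempty | hne
        · rw [hempty, facesIn_empty_right, finsum_mem_empty, cellEulerChar_empty]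
        · exact ih hF.wall (inter_mem_flats hX hP
            (hne.mono (inter_subset_inter_right _ hF.subset))) hBA
      · exact ih (hF.side hP hε) hX hBA
    rw [facesIn_insert, finsum_mem_iUnion (fun _ _ h => disjoint_facesIn_side h)
      fun ε => finite_facesIn hBfin _, finsum_eq_sum_of_fintype,
      ← hF.sum_cellEulerChar_side hA hT hX hP]
    exact Finset.sum_congr rfl fun ε _ => hside ε

end EulerRelation

section Restriction

open Dehyperplane

variable {N n m : ℕ} {T Y : Set (Euc N)} {A : Set (Dehyperplane N n T)}
  {P : Dehyperplane N n T} {Q : Dehyperplane N m Y} {x : Euc N}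

namespace Dehyperplane

lemma subset (P : Dehyperplane N n T) : P.P ⊆ T :=
  (subset_union_right.trans subset_union_left).trans P.union_eq.subset

lemma isClosed (P : Dehyperplane N n T) : IsClosed P.P :=
  P.closure_eq ▸ isClosed_closure.inter isClosed_closure

lemma plus_inter_eq_side (P : Dehyperplane N n T) (hY : Y ⊆ T) : P.plus ∩ Y = P.side 1 Y :=
  (P.side_eq_part_inter SignType.pos hY).symm

lemma minus_inter_eq_side (P : Dehyperplane N n T) (hY : Y ⊆ T) : P.minus ∩ Y = P.side (-1) Y :=
  (P.side_eq_part_inter SignType.neg hY).symm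

lemma sign_eq_of_trace (hplus : Q.plus = P.plus ∩ Y) (hminus : Q.minus = P.minus ∩ Y)
    (hx : x ∈ Y) : Q.sign x = P.sign x := by
  have hp : x ∈ Q.plus ↔ x ∈ P.plus := by rw [hplus, mem_inter_iff, and_iff_left hx]
  have hm : x ∈ Q.minus ↔ x ∈ P.minus := by rw [hminus, mem_inter_iff, and_iff_left hx]
  unfold sign
  split_ifs <;> tauto

end Dehyperplane

lemma mem_flat_of_mem_closure (hY : Y ∈ flats A) (hx : x ∈ T) (hxY : x ∈ closure Y) : x ∈ Y := by
  obtain ⟨-, B, -, rfl⟩ := hY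
  have hclosed : IsClosed (⋂ P ∈ B, P.P) := isClosed_biInter fun P _ => P.isClosed
  exact ⟨hx, hclosed.closure_subset_iff.2 inter_subset_right hxY⟩

lemma exists_crosses_of_mem_restrict (hQ : Q ∈ restrict A m Y) :
    ∃ P ∈ A, P.Crosses Y ∧ ∀ x ∈ Y, Q.sign x = P.sign x := by
  obtain ⟨P, hP, hYP, hne, -, hplus, hminus⟩ := hQ
  exact ⟨P, hP, ⟨hne, hYP⟩, fun x hx => sign_eq_of_trace hplus hminus hx⟩

namespace IsDA

lemma closure_inter_closure_eq_wall (hA : IsDA n T A) (hT : IsSimanifold n T) (hY : Y ∈ flats A)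
    (hP : P ∈ A) (hPY : P.Crosses Y) :
    closure (P.plus ∩ Y) ∩ closure (P.minus ∩ Y) = P.P ∩ Y := by
  have hYT := subset_of_mem_flats hY
  refine subset_antisymm (fun x hx => ?_) (subset_inter ?_ ?_)
  · have hxP : x ∈ P.P := P.closure_eq.subset
      ⟨closure_mono inter_subset_left hx.1, closure_mono inter_subset_left hx.2⟩
    exact ⟨hxP, mem_flat_of_mem_closure hY (P.subset hxP)
      (closure_mono inter_subset_right hx.1)⟩
  · rw [P.plus_inter_eq_side hYT]
    exact hA.wall_subset_closure_side hT hY hP hPY (by decide)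
  · rw [P.minus_inter_eq_side hYT]
    exact hA.wall_subset_closure_side hT hY hP hPY (by decide)

lemma exists_mem_restrict (hA : IsDA n T A) (hT : IsSimanifold n T) (hY : Y ∈ flats A)
    (hP : P ∈ A) (hPY : P.Crosses Y) :
    ∃ Q ∈ restrict A (sdim Y) Y, ∀ x ∈ Y, Q.sign x = P.sign x := by
  have hYT := subset_of_mem_flats hY
  have hwall := hA.isSimanifold hT (inter_mem_flats hY hP hPY.1)
  rw [Nat.eq_sub_of_add_eq (hA.sdim_wall_add_one hT hY hP hPY)] at hwall
  let Q : Dehyperplane N (sdim Y) Y :=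
    { P := P.P ∩ Y
      plus := P.plus ∩ Y
      minus := P.minus ∩ Y
      simP := hwall
      simPlus := P.plus_inter_eq_side hYT ▸ hA.isSimanifold_side hT hY hP hPY (by decide)
      simMinus := P.minus_inter_eq_side hYT ▸ hA.isSimanifold_side hT hY hP hPY (by decide)
      union_eq := by
        rw [← union_inter_distrib_right, ← union_inter_distrib_right, P.union_eq]
        exact inter_eq_right.2 hYT
      disj_pP := P.disj_pP.mono inter_subset_left inter_subset_left
      disj_pm := P.disj_pm.mono inter_subset_left inter_subset_left
      disj_Pm := P.disj_Pm.mono inter_subset_left inter_subset_left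
      closure_eq := hA.closure_inter_closure_eq_wall hT hY hP hPY }
  exact ⟨Q, ⟨P, hP, hPY.2, hPY.1, rfl, rfl, rfl⟩, fun x hx => sign_eq_of_trace rfl rfl hx⟩

lemma genericLocus_eq_restrict (hA : IsDA n T A) (hT : IsSimanifold n T) (hY : Y ∈ flats A) :
    genericLocus A Y = {x ∈ Y | ∀ Q ∈ restrict A (sdim Y) Y, Q.sign x ≠ 0} := by
  ext x
  refine and_congr_right fun hx => ⟨fun hgen Q hQ h0 => ?_, fun hne P hP h0 => ?_⟩
  · obtain ⟨P, hP, hPY, hsign⟩ := exists_crosses_of_mem_restrict hQ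
    exact hPY.2 (hgen P hP ((hsign x hx).symm.trans h0))
  · by_contra hYP
    have hxP : x ∈ P.P := (sign_eq_zero_iff (subset_of_mem_flats hY hx)).1 h0
    obtain ⟨Q, hQ, hsign⟩ := hA.exists_mem_restrict hT hY hP ⟨⟨x, hxP, hx⟩, hYP⟩
    exact hne Q hQ ((hsign x hx).trans h0)

lemma signClass_restrict (hA : IsDA n T A) (hT : IsSimanifold n T) (hY : Y ∈ flats A)
    (hx : x ∈ Y) : signClass (restrict A (sdim Y) Y) Y x = signClass A Y x := by
  have hYT := subset_of_mem_flats hY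
  ext y
  refine and_congr_right fun hy => ⟨fun hyx P hP => ?_, fun hyx Q hQ => ?_⟩
  · by_cases hne : (P.P ∩ Y).Nonempty
    · by_cases hYP : Y ⊆ P.P
      · rw [(sign_eq_zero_iff (hYT hy)).2 (hYP hy), (sign_eq_zero_iff (hYT hx)).2 (hYP hx)]
      · obtain ⟨Q, hQ, hsign⟩ := hA.exists_mem_restrict hT hY hP ⟨hne, hYP⟩
        rw [← hsign y hy, ← hsign x hx, hyx Q hQ]
    · exact sign_eq_of_isPreconnected (hA.isSimanifold hT hY).isPreconnected hYT
        (fun z hz h0 => hne ⟨z, (sign_eq_zero_iff (hYT hz)).1 h0, hz⟩) hy hx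
  · obtain ⟨P, hP, -, hsign⟩ := exists_crosses_of_mem_restrict hQ
    rw [hsign y hy, hsign x hx, hyx P hP]

end IsDA

end Restriction

section Chambers

open Dehyperplane

variable {N n : ℕ} {T X Y Y' : Set (Euc N)} {A : Set (Dehyperplane N n T)} {x : Euc N}

lemma mem_inter_iInter_part_iff {ε : Dehyperplane N n T → SignType} :
    x ∈ T ∩ ⋂ P ∈ A, P.part (ε P) ↔ x ∈ T ∧ ∀ P ∈ A, P.sign x = ε P := by
  rw [mem_inter_iff, mem_iInter₂]
  exact and_congr_right fun hx => forall₂_congr fun P _ => mem_part_iff hx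

lemma setOf_isChamber_eq_image_signClass :
    {F | IsChamber A F} = signClass A T '' {x ∈ T | ∀ P ∈ A, P.sign x ≠ 0} := by
  ext F
  constructor
  · rintro ⟨⟨x, hx⟩, ε, hε, rfl⟩
    obtain ⟨hxT, hxε⟩ := mem_inter_iInter_part_iff.1 hx
    refine ⟨x, ⟨hxT, fun P hP => hxε P hP ▸ hε P hP⟩, ?_⟩
    ext y
    rw [mem_inter_iInter_part_iff]
    exact and_congr_right fun _ => forall₂_congr fun P hP => by rw [hxε P hP]
  · rintro ⟨x, ⟨hxT, hx⟩, rfl⟩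
    refine ⟨⟨x, mem_signClass_self hxT⟩, fun P => P.sign x, hx, ?_⟩
    ext y
    exact mem_inter_iInter_part_iff.symm

lemma IsDA.setOf_isChamber_restrict (hA : IsDA n T A) (hT : IsSimanifold n T)
    (hY : Y ∈ flats A) :
    {F | IsChamber (restrict A (sdim Y) Y) F} = signClass A Y '' genericLocus A Y := by
  rw [setOf_isChamber_eq_image_signClass, ← hA.genericLocus_eq_restrict hT hY]
  exact image_congr fun x hx => hA.signClass_restrict hT hY hx.1

lemma signClass_eq_of_mem_flats (hY : Y ∈ flats A) (hYX : Y ⊆ X) (hXT : X ⊆ T) (hx : x ∈ Y) :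
    signClass A Y x = signClass A X x := by
  refine subset_antisymm (fun y hy => ⟨hYX hy.1, hy.2⟩) fun y hy => ⟨?_, hy.2⟩
  obtain ⟨-, B, hB, rfl⟩ := hY
  refine ⟨hXT hy.1, mem_iInter₂.2 fun P hP => ?_⟩
  rw [← sign_eq_zero_iff (hXT hy.1), hy.2 P (hB hP), sign_eq_zero_iff hx.1]
  exact mem_iInter₂.1 hx.2 P hP

lemma relOpen_signClass (hA : A.Finite) (hYT : Y ⊆ T) (hx : x ∈ genericLocus A Y) :
    RelOpen (signClass A Y x) Y := by
  rintro y ⟨-, hyx⟩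
  filter_upwards [self_mem_nhdsWithin, nhdsWithin_mono y hYT (eventually_forall_sign_eq hA y)]
    with z hzY hz
  refine ⟨hzY, fun P hP => ?_⟩
  by_cases h0 : P.sign x = 0
  · rw [h0, sign_eq_zero_iff (hYT hzY)]
    exact hx.2 P hP h0 hzY
  · rw [hz P hP (hyx P hP ▸ h0), hyx P hP]

lemma IsDA.sdim_signClass (hA : IsDA n T A) (hT : IsSimanifold n T) (hY : Y ∈ flats A)
    (hx : x ∈ genericLocus A Y) : sdim (signClass A Y x) = sdim Y :=
  (hA.isSimanifold hT hY).sdim_eq_of_relOpen ⟨x, mem_signClass_self hx.1⟩ (fun _ hy => hy.1)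
    (relOpen_signClass hA.1 (subset_of_mem_flats hY) hx)

lemma exists_flat_mem_genericLocus (hX : X ∈ flats A) (hx : x ∈ X) :
    ∃ Y ∈ flats A, Y ⊆ X ∧ x ∈ genericLocus A Y := by
  obtain ⟨-, B, hB, rfl⟩ := hX
  have hxB : B ⊆ {P ∈ A | P.sign x = 0} := fun P hP =>
    ⟨hB hP, (sign_eq_zero_iff hx.1).2 (mem_iInter₂.1 hx.2 P hP)⟩
  have hxY : x ∈ T ∩ ⋂ P ∈ {P ∈ A | P.sign x = 0}, P.P :=
    ⟨hx.1, mem_iInter₂.2 fun P hP => (sign_eq_zero_iff hx.1).1 hP.2⟩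
  exact ⟨_, ⟨⟨x, hxY⟩, _, sep_subset A _, rfl⟩,
    inter_subset_inter_right T (biInter_subset_biInter_left hxB), hxY,
    fun P hP h0 => inter_subset_right.trans (biInter_subset_of_mem ⟨hP, h0⟩)⟩

lemma subset_of_mem_genericLocus (hY : Y ⊆ T) (hx : x ∈ genericLocus A Y) (hY' : Y' ∈ flats A)
    (hxY' : x ∈ Y') : Y ⊆ Y' := by
  obtain ⟨-, B, hB, rfl⟩ := hY'
  exact subset_inter hY (subset_iInter₂ fun P hP =>
    hx.2 P (hB hP) ((sign_eq_zero_iff hxY'.1).2 (mem_iInter₂.1 hxY'.2 P hP)))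

lemma facesIn_eq_biUnion (hX : X ∈ flats A) :
    facesIn A X = ⋃ Y ∈ {Y ∈ flats A | Y ⊆ X}, signClass A Y '' genericLocus A Y := by
  have hXT := subset_of_mem_flats hX
  refine subset_antisymm ?_ (iUnion₂_subset ?_)
  · rintro _ ⟨x, hx, rfl⟩
    obtain ⟨Y, hY, hYX, hxY⟩ := exists_flat_mem_genericLocus hX hx
    exact mem_biUnion (show Y ∈ {Y ∈ flats A | Y ⊆ X} from ⟨hY, hYX⟩)
      ⟨x, hxY, signClass_eq_of_mem_flats hY hYX hXT hxY.1⟩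
  · rintro Y ⟨hY, hYX⟩ _ ⟨x, hx, rfl⟩
    exact ⟨x, hYX hx.1, (signClass_eq_of_mem_flats hY hYX hXT hx.1).symm⟩

lemma pairwiseDisjoint_image_signClass_genericLocus :
    (flats A).PairwiseDisjoint fun Y => signClass A Y '' genericLocus A Y := by
  intro Y hY Y' hY' hne
  refine disjoint_left.2 ?_
  rintro _ ⟨x, hx, rfl⟩ ⟨x', hx', heq⟩
  refine hne (subset_antisymm
    (subset_of_mem_genericLocus (subset_of_mem_flats hY) hx hY'
      (heq.superset (mem_signClass_self hx.1)).1)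
    (subset_of_mem_genericLocus (subset_of_mem_flats hY') hx' hY
      (heq.subset (mem_signClass_self hx'.1)).1))

lemma finsum_mem_eq_mul_ncard {α R : Type*} [Semiring R] {s : Set α} (hs : s.Finite)
    {f : α → R} {c : R} (hf : ∀ a ∈ s, f a = c) : ∑ᶠ a ∈ s, f a = c * s.ncard := by
  rw [finsum_mem_eq_finite_toFinset_sum f hs, Finset.sum_congr rfl fun a ha =>
    hf a (hs.mem_toFinset.1 ha), Finset.sum_const, nsmul_eq_mul, ncard_eq_toFinset_card s hs,
    Nat.cast_comm]

lemma IsDA.finite_image_signClass_genericLocus (hA : IsDA n T A) (Y : Set (Euc N)) :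
    (signClass A Y '' genericLocus A Y).Finite :=
  (finite_facesIn hA.1 Y).subset (image_mono genericLocus_subset)

lemma IsDA.finsum_image_signClass_genericLocus (hA : IsDA n T A) (hT : IsSimanifold n T)
    (hY : Y ∈ flats A) : ∑ᶠ G ∈ signClass A Y '' genericLocus A Y, (-1 : ℤ) ^ sdim G =
      (-1 : ℤ) ^ sdim Y * Set.ncard {F | IsChamber (restrict A (sdim Y) Y) F} := by
  rw [hA.setOf_isChamber_restrict hT hY]
  refine finsum_mem_eq_mul_ncard (hA.finite_image_signClass_genericLocus Y) ?_
  rintro _ ⟨x, hx, rfl⟩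
  rw [hA.sdim_signClass hT hY hx]

end Chambers

/-- for every flat `X` of a DA `A`,
`Σ_{Y ∈ L_A, Y ≥ X} (−1)^{dim Y} #C_{A^Y} = (−1)^{dim X}`
(recall `Y ≥ X` means `Y ⊆ X`). -/
theorem alternating_sum_chambers {N n : ℕ} (hn : 1 ≤ n) {T : Set (Euc N)}
    (hT : IsSimanifold n T) (A : Set (Dehyperplane N n T)) (hA : IsDA n T A)
    (X : Set (Euc N)) (hX : X ∈ flats A) :
    ∑ᶠ Y ∈ {Y ∈ flats A | Y ⊆ X},
        (-1 : ℤ) ^ (sdim Y) * Set.ncard {F | IsChamber (restrict A (sdim Y) Y) F} =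
      (-1 : ℤ) ^ (sdim X) := by
  have hfinite := (finite_flats hA.1).subset (sep_subset (flats A) (· ⊆ X))
  have hdisjoint := (pairwiseDisjoint_image_signClass_genericLocus (A := A)).subset
    (sep_subset (flats A) (· ⊆ X))
  calc
    _ = ∑ᶠ Y ∈ {Y ∈ flats A | Y ⊆ X},
          ∑ᶠ F ∈ signClass A Y '' genericLocus A Y, (-1 : ℤ) ^ sdim F :=
      finsum_mem_congr rfl fun Y hY => (hA.finsum_image_signClass_genericLocus hT hY.1).symm
    _ = ∑ᶠ F ∈ facesIn A X, (-1 : ℤ) ^ sdim F := by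
      rw [facesIn_eq_biUnion hX, finsum_mem_biUnion hdisjoint hfinite
        fun Y _ => hA.finite_image_signClass_genericLocus Y]
    _ = cellEulerChar X := IsCell.refl.finsum_facesIn hA hT hX Subset.rfl
    _ = (-1 : ℤ) ^ sdim X := cellEulerChar_of_nonempty hX.1
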